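/- Let M₁, M₂ be positive integers and ℓ₁, ℓ₂ integers with 1 ≤ ℓ₁ ≤ M₁, 1 ≤ ℓ₂ ≤ M₂. For T ≥ 10 set y = T^{3/4}. Then for every ε > 0, |∫_{T/2}^T S₂(x) dx| ≪ T^{2−1/8+ε}, where the implied constant depends at most on M₁, M₂ and ε. -/

import Mathlib

open Real MeasureTheory Finset
open scoped Classical

noncomputable section

/-- The phase `h ℓ₂/M₂ + r ℓ₁/M₁ + 1/8` attached to a factorization pair `p = (h, r)`. -/
def phase (M₁ M₂ ℓ₁ ℓ₂ : ℕ) (p : ℕ × ℕ) : ℝ :=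
  ((p.1 : ℝ) * ℓ₂) / M₂ + ((p.2 : ℝ) * ℓ₁) / M₁ + 1/8

/-- `α(n, i) = √n₁ + (−1)^{i₁}√n₂ + (−1)^{i₂}√n₃ + (−1)^{i₃}√n₄`. -/
def alphaNI (n : ℕ × ℕ × ℕ × ℕ) (i : Fin 2 × Fin 2 × Fin 2) : ℝ :=
  Real.sqrt n.1 + (-1 : ℝ) ^ (i.1 : ℕ) * Real.sqrt n.2.1
    + (-1 : ℝ) ^ (i.2.1 : ℕ) * Real.sqrt n.2.2.1
    + (-1 : ℝ) ^ (i.2.2 : ℕ) * Real.sqrt n.2.2.2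

/-- `β(h, r, i)`, for the factorizations `n_j = h_j r_j` encoded as pairs `p_j`. -/
def betaSum (M₁ M₂ ℓ₁ ℓ₂ : ℕ) (i : Fin 2 × Fin 2 × Fin 2) (p₁ p₂ p₃ p₄ : ℕ × ℕ) : ℝ :=
  phase M₁ M₂ ℓ₁ ℓ₂ p₁ + (-1 : ℝ) ^ (i.1 : ℕ) * phase M₁ M₂ ℓ₁ ℓ₂ p₂
    + (-1 : ℝ) ^ (i.2.1 : ℕ) * phase M₁ M₂ ℓ₁ ℓ₂ p₃
    + (-1 : ℝ) ^ (i.2.2 : ℕ) * phase M₁ M₂ ℓ₁ ℓ₂ p₄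

/-- The "diagonal" part `S₁(x)` of `R₀(x;y)⁴`. -/
def S1 (M₁ M₂ ℓ₁ ℓ₂ : ℕ) (y x : ℝ) : ℝ :=
  x / (32 * π ^ 4) * ∑ i : Fin 2 × Fin 2 × Fin 2,
    ∑ n₁ ∈ Finset.Icc 1 ⌊y⌋₊, ∑ n₂ ∈ Finset.Icc 1 ⌊y⌋₊,
    ∑ n₃ ∈ Finset.Icc 1 ⌊y⌋₊, ∑ n₄ ∈ Finset.Icc 1 ⌊y⌋₊,
      if alphaNI (n₁, n₂, n₃, n₄) i = 0 then
        ((n₁ : ℝ) * n₂ * n₃ * n₄) ^ (-(3:ℝ)/4) *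
          ∑ p₁ ∈ Nat.divisorsAntidiagonal n₁, ∑ p₂ ∈ Nat.divisorsAntidiagonal n₂,
          ∑ p₃ ∈ Nat.divisorsAntidiagonal n₃, ∑ p₄ ∈ Nat.divisorsAntidiagonal n₄,
            Real.cos (2 * π * betaSum M₁ M₂ ℓ₁ ℓ₂ i p₁ p₂ p₃ p₄)
      else 0

/-- The "off-diagonal" part `S₂(x)` of `R₀(x;y)⁴`. -/
def S2 (M₁ M₂ ℓ₁ ℓ₂ : ℕ) (y x : ℝ) : ℝ :=
  x / (32 * π ^ 4) * ∑ i : Fin 2 × Fin 2 × Fin 2,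
    ∑ n₁ ∈ Finset.Icc 1 ⌊y⌋₊, ∑ n₂ ∈ Finset.Icc 1 ⌊y⌋₊,
    ∑ n₃ ∈ Finset.Icc 1 ⌊y⌋₊, ∑ n₄ ∈ Finset.Icc 1 ⌊y⌋₊,
      if alphaNI (n₁, n₂, n₃, n₄) i ≠ 0 then
        ((n₁ : ℝ) * n₂ * n₃ * n₄) ^ (-(3:ℝ)/4) *
          ∑ p₁ ∈ Nat.divisorsAntidiagonal n₁, ∑ p₂ ∈ Nat.divisorsAntidiagonal n₂,
          ∑ p₃ ∈ Nat.divisorsAntidiagonal n₃, ∑ p₄ ∈ Nat.divisorsAntidiagonal n₄,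
            Real.cos (4 * π * alphaNI (n₁, n₂, n₃, n₄) i * Real.sqrt x
              - 2 * π * betaSum M₁ M₂ ℓ₁ ℓ₂ i p₁ p₂ p₃ p₄)
      else 0

/-!
Integration by parts gives `∫ x cos (4πα√x - φ) ≪ T · min T (√T / |α|)` over `[T / 2, T]`, so
everything reduces to bounding `∑ (n₁n₂n₃n₄) ^ (-3/4) min T (√T / |α|)` over `n_j ≤ T ^ (3/4)`.
A dyadic decomposition in the `n_j` and in `|α|` turns this into a counting problem: for boxes
`n_j ∈ [N_j, 2N_j)` and `Δ ≥ T ^ (-1/2)`, the number of points with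
`0 < |√n₀ ± √n₁ ± √n₂ ± √n₃| ≤ Δ` should be at most `T ^ (3/8 + ε) Δ (N₀N₁N₂N₃) ^ (3/4)`.
Order the sizes as `N₀ ≥ N₁ ≥ N₂ ≥ N₃`; there are three regimes.

* If `Δ√N₀ ≫ 1`, for fixed `n₁, n₂, n₃` there are `O(Δ√N₀)` choices of `n₀`.
* If `Δ√N₀ ≪ 1` and `N₀ ≥ T ^ (1/4)`, cut the line into cells of length `Δ`, write `α` as the sum of
  `± √n₀ ± √n₂` and `± √n₁ ± √n₃`, and apply Cauchy–Schwarz: it remains to bound the number of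
  pairs of points at which `± √n₀ ± √n₂` falls in the same cell.
* If `Δ√N₀ ≪ 1` and `N₀ ≤ T ^ (1/4)`, multiplying `α` by its conjugates produces integers `m`, `k`
  such that `k` is close, but not equal, to `4 m √b` with `b = n₂n₃`. Such triples are counted in
  two ways, through the spacing of the fractions `k / m` and through quadratic congruences modulo
  `m ^ 2`; the divisor bound recovers `n` from `(m, k, b)`.
-/

section Counting

variable {ι κ : Type*}

lemma card_le_of_pairwise_le_abs_sub {s : Finset ι} {f : ι → ℝ} {a L σ : ℝ} (hσ : 0 < σ)
    (hL : 0 ≤ L) (hmem : ∀ x ∈ s, f x ∈ Set.Icc a (a + L))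
    (hsep : (s : Set ι).Pairwise fun x y => σ ≤ |f x - f y|) :
    (#s : ℝ) ≤ L / σ + 1 := by
  have hmaps : ∀ x ∈ s, ⌊(f x - a) / σ⌋₊ ∈ range (⌊L / σ⌋₊ + 1) := fun x hx =>
    mem_range_succ_iff.2 <| Nat.floor_le_floor <|
      div_le_div_of_nonneg_right (by linarith [(hmem x hx).2]) hσ.le
  have hinj : Set.InjOn (fun x => ⌊(f x - a) / σ⌋₊) s := by
    intro x hx y hy hxy
    by_contra hne
    have floor_bounds (z : ι) (hz : z ∈ s) : (⌊(f z - a) / σ⌋₊ : ℝ) ≤ (f z - a) / σ ∧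
        (f z - a) / σ < ⌊(f z - a) / σ⌋₊ + 1 :=
      ⟨Nat.floor_le (div_nonneg (by linarith [(hmem z hz).1]) hσ.le), Nat.lt_floor_add_one _⟩
    have hlt : |(f x - a) / σ - (f y - a) / σ| < 1 := by
      have hx' := floor_bounds x hx
      have hy' := floor_bounds y hy
      simp only at hxy
      rw [hxy] at hx'
      rw [abs_lt]
      constructor <;> linarith
    rw [← sub_div, abs_div, abs_of_pos hσ, div_lt_one hσ, sub_sub_sub_cancel_right] at hlt
    exact (hsep hx hy hne).not_gt hlt
  have hcard : #s ≤ ⌊L / σ⌋₊ + 1 := by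
    simpa using card_le_card_of_injOn _ hmaps hinj
  calc (#s : ℝ) ≤ ⌊L / σ⌋₊ + 1 := mod_cast hcard
    _ ≤ L / σ + 1 := by gcongr; exact Nat.floor_le (by positivity)

lemma card_le_mul_card_of_fiber_le [DecidableEq κ] {s : Finset ι} {t : Finset κ} {f : ι → κ}
    (hf : ∀ x ∈ s, f x ∈ t) {B : ℝ} (hB : ∀ y ∈ t, (#{x ∈ s | f x = y} : ℝ) ≤ B) :
    (#s : ℝ) ≤ B * #t := by
  rw [card_eq_sum_card_fiberwise hf, Nat.cast_sum, mul_comm, ← nsmul_eq_mul]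
  exact sum_le_card_nsmul _ _ _ hB

end Counting

section DivisorBound

lemma add_one_le_mul_pow_of_one_lt {x : ℝ} (hx : 1 < x) (e : ℕ) :
    (e : ℝ) + 1 ≤ (1 + 1 / (x - 1)) * x ^ e := by
  have hx' : 0 < x - 1 := sub_pos.2 hx
  calc (e : ℝ) + 1 ≤ 1 + e * (x - 1) + (1 / (x - 1) + e) := by
        have : 0 ≤ e * (x - 1) + 1 / (x - 1) := by positivity
        linarith
    _ = (1 + 1 / (x - 1)) * (1 + e * (x - 1)) := by field_simp
    _ ≤ (1 + 1 / (x - 1)) * x ^ e := by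
        gcongr
        exact one_add_mul_sub_le_pow (by linarith) e

lemma add_one_le_pow_of_two_le {x : ℝ} (hx : 2 ≤ x) (e : ℕ) : (e : ℝ) + 1 ≤ x ^ e := by
  have : (e : ℝ) * 1 ≤ e * (x - 1) := mul_le_mul_of_nonneg_left (by linarith) e.cast_nonneg
  linarith [one_add_mul_sub_le_pow (show -1 ≤ x by linarith) e]

/-- Only the finitely many primes with `p ^ ε < 2` contribute a factor above `1` to
`d(n) / n ^ ε = ∏ (e_p + 1) / p ^ (e_p ε)`. -/
lemma exists_card_divisors_le_rpow {ε : ℝ} (hε : 0 < ε) :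
    ∃ C : ℝ, 1 ≤ C ∧ ∀ n : ℕ, (#n.divisors : ℝ) ≤ C * (n : ℝ) ^ ε := by
  have h2ε : 0 < (2 : ℝ) ^ ε - 1 := sub_pos.2 (one_lt_rpow one_lt_two hε)
  set A : ℝ := 1 + 1 / ((2 : ℝ) ^ ε - 1)
  have hA : 1 ≤ A := le_add_of_nonneg_right (by positivity)
  set P : ℕ := ⌈(2 : ℝ) ^ (1 / ε)⌉₊
  refine ⟨A ^ P, one_le_pow₀ hA, fun n => ?_⟩
  rcases eq_or_ne n 0 with rfl | hn
  · simp [hε.ne']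
  have local_factor : ∀ p ∈ n.primeFactors, ((n.factorization p + 1 : ℕ) : ℝ) ≤
      (if p < P then A else 1) * ((p : ℝ) ^ n.factorization p) ^ ε := by
    intro p hp
    have hp2 : (2 : ℝ) ≤ p := mod_cast (Nat.prime_of_mem_primeFactors hp).two_le
    rw [← rpow_pow_comm (by positivity), Nat.cast_add_one]
    split_ifs with hpP
    · exact (add_one_le_mul_pow_of_one_lt (sub_pos.1 h2ε) _).trans (by gcongr)
    · rw [one_mul]
      refine add_one_le_pow_of_two_le ?_ _
      calc (2 : ℝ) = ((2 : ℝ) ^ (1 / ε)) ^ ε := by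
            rw [← rpow_mul zero_le_two, one_div_mul_cancel hε.ne', rpow_one]
        _ ≤ (p : ℝ) ^ ε := by
            gcongr
            exact (Nat.le_ceil _).trans (mod_cast not_lt.1 hpP)
  have prod_pow : ∏ p ∈ n.primeFactors, ((p : ℝ) ^ n.factorization p) ^ ε = (n : ℝ) ^ ε := by
    rw [finsetProd_rpow _ _ fun p _ => by positivity]
    congr 1
    exact_mod_cast Nat.prod_factorization_pow_eq_self hn
  have hcard : #{p ∈ n.primeFactors | p < P} ≤ P := by
    simpa using card_le_card fun p (hp : p ∈ {p ∈ n.primeFactors | p < P}) =>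
      mem_range.2 (mem_filter.1 hp).2
  calc (#n.divisors : ℝ) = ∏ p ∈ n.primeFactors, ((n.factorization p + 1 : ℕ) : ℝ) := by
        rw [Nat.card_divisors hn, Nat.cast_prod]
    _ ≤ ∏ p ∈ n.primeFactors, (if p < P then A else 1) * ((p : ℝ) ^ n.factorization p) ^ ε :=
        prod_le_prod (fun _ _ => by positivity) local_factor
    _ = A ^ #{p ∈ n.primeFactors | p < P} * (n : ℝ) ^ ε := by
        rw [prod_mul_distrib, prod_pow, prod_ite, prod_const, prod_const_one, mul_one]
    _ ≤ A ^ P * (n : ℝ) ^ ε := by gcongr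

lemma exists_one_add_log_le_rpow {ε : ℝ} (hε : 0 < ε) :
    ∃ C : ℝ, 1 ≤ C ∧ ∀ T : ℝ, 1 ≤ T → 1 + log T ≤ C * T ^ ε := by
  refine ⟨1 + 1 / ε, le_add_of_nonneg_right (by positivity), fun T hT => ?_⟩
  calc 1 + log T ≤ T ^ ε + T ^ ε / ε :=
        add_le_add (one_le_rpow hT hε.le) (log_le_rpow_div (by linarith) hε)
    _ = (1 + 1 / ε) * T ^ ε := by ring

end DivisorBound

section QuadraticCongruence

lemma dvd_two_mul_sub_of_gcd_eq {q k x y : ℤ} (hq : q ≠ 0) (hk : IsCoprime q k)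
    (hx : q ∣ x ^ 2 - k ^ 2) (hy : q ∣ y ^ 2 - k ^ 2)
    (hgcd : Int.gcd (x - k) q = Int.gcd (y - k) q) : q ∣ 2 * (x - y) := by
  have dvd_gcd_mul (z : ℤ) (hz : q ∣ z ^ 2 - k ^ 2) : q ∣ (Int.gcd (z - k) q : ℤ) * (z + k) := by
    rw [Int.gcd_eq_gcd_ab, add_mul]
    refine dvd_add ?_ (Dvd.intro _ (mul_assoc q _ _).symm)
    exact (hz.mul_right (Int.gcdA (z - k) q)).trans (dvd_of_eq (by ring))
  obtain ⟨d, hd⟩ : ∃ d : ℤ, d = Int.gcd (x - k) q := ⟨_, rfl⟩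
  have hdx : d ∣ x - k := hd ▸ Int.gcd_dvd_left ..
  have hdy : d ∣ y - k := by rw [hd, hgcd]; exact Int.gcd_dvd_left ..
  obtain ⟨q', rfl⟩ : d ∣ q := hd ▸ Int.gcd_dvd_right ..
  have hd0 : d ≠ 0 := left_ne_zero_of_mul hq
  have hx' : q' ∣ x + k :=
    Int.dvd_of_mul_dvd_mul_left hd0 (by simpa only [← hd] using dvd_gcd_mul x hx)
  have hy' : q' ∣ y + k :=
    Int.dvd_of_mul_dvd_mul_left hd0 (by simpa only [← hgcd, ← hd] using dvd_gcd_mul y hy)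
  have d_dvd : d ∣ x - y := by simpa using dvd_sub hdx hdy
  have q'_dvd : q' ∣ x - y := by simpa using dvd_sub hx' hy'
  have gcd_dvd_two : (Int.gcd d q' : ℤ) ∣ 2 := by
    have gcd_dvd_left : (Int.gcd d q' : ℤ) ∣ d := Int.gcd_dvd_left ..
    have gcd_dvd_mul : (Int.gcd d q' : ℤ) ∣ 2 * k := by
      have := dvd_sub ((Int.gcd_dvd_right d q').trans hx') (gcd_dvd_left.trans hdx)
      rwa [show x + k - (x - k) = 2 * k by ring] at this
    exact (hk.of_isCoprime_of_dvd_left (gcd_dvd_left.mul_right q')).dvd_of_dvd_mul_right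
      gcd_dvd_mul
  have dvd_gcd_mul_sub : d * q' ∣ (Int.gcd d q' : ℤ) * (x - y) := by
    rw [Int.gcd_eq_gcd_ab, add_mul, mul_assoc, mul_right_comm, mul_comm q']
    exact dvd_add (mul_dvd_mul_left d (q'_dvd.mul_left _))
      ((mul_dvd_mul_right d_dvd q').trans (dvd_of_eq (by ring)) |>.mul_right _)
  exact dvd_gcd_mul_sub.trans (mul_dvd_mul_right gcd_dvd_two _)

lemma card_le_of_pairwise_sq_congr {q : ℕ} (hq : 0 < q) {R : ℝ} (hR : 0 ≤ R) {S : Finset ℕ}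
    (hle : ∀ k ∈ S, (k : ℝ) ≤ R) (hcop : ∀ k ∈ S, q.Coprime k)
    (hsq : ∀ k ∈ S, ∀ l ∈ S, (q : ℤ) ∣ (k : ℤ) ^ 2 - (l : ℤ) ^ 2) :
    (#S : ℝ) ≤ (2 * R / q + 1) * #q.divisors := by
  rcases S.eq_empty_or_nonempty with rfl | ⟨l, hl⟩
  · simp only [card_empty, Nat.cast_zero]
    positivity
  refine card_le_mul_card_of_fiber_le (f := fun k : ℕ => Int.gcd ((k : ℤ) - l) q)
    (fun k _ => Nat.mem_divisors.2
      ⟨Int.natCast_dvd_natCast.1 (Int.gcd_dvd_right ..), hq.ne'⟩) fun d _ => ?_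
  rw [show 2 * R / q = R / (q / 2) by field_simp]
  refine card_le_of_pairwise_le_abs_sub (f := fun k : ℕ => (k : ℝ)) (a := 0) (by positivity) hR
    (fun k hk => ⟨k.cast_nonneg, by simpa using hle k (mem_filter.1 hk).1⟩) fun x hx y hy hne => ?_
  obtain ⟨hxS, hxd⟩ := mem_filter.1 hx
  obtain ⟨hyS, hyd⟩ := mem_filter.1 hy
  have hdvd : (q : ℤ) ∣ 2 * ((x : ℤ) - y) :=
    dvd_two_mul_sub_of_gcd_eq (mod_cast hq.ne') (Nat.isCoprime_iff_coprime.2 (hcop l hl))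
      (hsq x hxS l hl) (hsq y hyS l hl) (hxd.trans hyd.symm)
  have hle_abs : (q : ℝ) ≤ |2 * ((x : ℝ) - y)| := by
    exact_mod_cast Int.le_of_dvd (abs_pos.2 (by omega)) ((dvd_abs _ _).2 hdvd)
  rw [abs_mul, abs_two] at hle_abs
  linarith

end QuadraticCongruence

section NearPell

lemma inv_le_abs_div_sub_div {m k m' k' : ℕ} (hm : 0 < m) (hm' : 0 < m') (hmk : m.Coprime k)
    (hmk' : m'.Coprime k') (hne : (m, k) ≠ (m', k')) :
    (m * m' : ℝ)⁻¹ ≤ |(k : ℝ) / m - k' / m'| := by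
  have hcross : (k : ℤ) * m' - m * k' ≠ 0 := by
    intro h
    have h' : k * m' = m * k' := by exact_mod_cast sub_eq_zero.1 h
    obtain rfl : m = m' := Nat.dvd_antisymm (hmk.dvd_of_dvd_mul_left (Dvd.intro _ h'.symm))
      (hmk'.dvd_of_dvd_mul_right (Dvd.intro_left _ h'))
    exact hne (by rw [Nat.eq_of_mul_eq_mul_left hm ((mul_comm m k).trans h')])
  have hone : (1 : ℝ) ≤ |(k : ℝ) * m' - m * k'| := by exact_mod_cast Int.one_le_abs hcross
  have hmm' : (0 : ℝ) < m * m' := by positivity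
  rw [div_sub_div _ _ (by positivity) (by positivity), abs_div, abs_of_pos hmm', inv_eq_one_div]
  gcongr

lemma card_Icc_floor_erase_zero_le {K : ℝ} (hK : 0 ≤ K) :
    (#((Icc (-⌊K⌋) ⌊K⌋).erase 0) : ℝ) ≤ 2 * K := by
  have hK' : 0 ≤ ⌊K⌋ := Int.floor_nonneg.2 hK
  have hcard : (#((Icc (-⌊K⌋) ⌊K⌋).erase 0) : ℤ) = 2 * ⌊K⌋ := by
    rw [card_erase_of_mem (mem_Icc.2 ⟨neg_nonpos.2 hK', hK'⟩), Int.card_Icc]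
    omega
  calc (#((Icc (-⌊K⌋) ⌊K⌋).erase 0) : ℝ) = 2 * ⌊K⌋ := by exact_mod_cast hcard
    _ ≤ 2 * K := by gcongr; exact Int.floor_le K

/-- `IsNearPell B θ m k b` says that `k` is within `θ` of `4 m √b`, where `B ≤ b < 4 B`, without
being equal to it; thus `k ^ 2 - 16 b m ^ 2` is a small nonzero integer. -/
structure IsNearPell (B : ℕ) (θ : ℝ) (m k b : ℕ) : Prop where
  le_b : B ≤ b
  b_lt : b < 4 * B
  abs_sub_le : |(k : ℝ) - 4 * m * √b| ≤ θ
  sq_sub_ne_zero : (k : ℤ) ^ 2 - 16 * (m : ℤ) ^ 2 * b ≠ 0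

namespace IsNearPell

variable {B m k b : ℕ} {θ X D : ℝ} {Z : Finset (ℕ × ℕ × ℕ)}

lemma of_mul {j : ℕ} (hj : 0 < j) (h : IsNearPell B θ (j * m) (j * k) b) :
    IsNearPell B (θ / j) m k b where
  le_b := h.le_b
  b_lt := h.b_lt
  abs_sub_le := by
    have hj' : (0 : ℝ) < j := mod_cast hj
    rw [le_div_iff₀' hj', ← abs_of_pos hj', ← abs_mul]
    refine (congrArg abs ?_).trans_le h.abs_sub_le
    push_cast
    ring
  sq_sub_ne_zero h0 := h.sq_sub_ne_zero <| by
    push_cast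
    linear_combination (j : ℤ) ^ 2 * h0

lemma sqrt_le (h : IsNearPell B θ m k b) : √(b : ℝ) ≤ 2 * √(B : ℝ) := by
  calc √(b : ℝ) ≤ √(2 ^ 2 * B) := sqrt_le_sqrt (by exact_mod_cast h.b_lt.le)
    _ = 2 * √B := by rw [sqrt_mul (by positivity), sqrt_sq zero_le_two]

lemma one_le_mul_sqrt (h : IsNearPell B θ m k b) (hB : 0 < B) (hm : 0 < m) :
    (1 : ℝ) ≤ m * √b :=
  one_le_mul_of_one_le_of_one_le (mod_cast hm)
    (one_le_sqrt.2 (mod_cast Nat.succ_le_of_lt (hB.trans_le h.le_b)))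

lemma cast_k_le (h : IsNearPell B θ m k b) (hθ : θ ≤ 1) (hB : 0 < B) (hm : 0 < m) :
    (k : ℝ) ≤ 9 * m * √B := by
  have hk : (k : ℝ) ≤ 4 * m * √b + 1 := by linarith [(abs_le.1 h.abs_sub_le).2]
  have hmb : (m : ℝ) * √b ≤ m * (2 * √B) := by gcongr; exact h.sqrt_le
  have hmB : (1 : ℝ) ≤ m * √B := one_le_mul_of_one_le_of_one_le (mod_cast hm)
    (one_le_sqrt.2 (mod_cast hB))
  linarith

lemma abs_sq_sub_le (h : IsNearPell B θ m k b) (hθ0 : 0 ≤ θ) (hθ : θ ≤ 1) (hB : 0 < B) (hm : 0 < m)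
    (hmX : m ≤ 2 * X) : |(k : ℝ) ^ 2 - 16 * (m : ℝ) ^ 2 * b| ≤ 36 * θ * X * √B := by
  have hsum : (k : ℝ) + 4 * m * √b ≤ 9 * (m * √b) := by
    linarith [(abs_le.1 h.abs_sub_le).2, h.one_le_mul_sqrt hB hm]
  calc |(k : ℝ) ^ 2 - 16 * (m : ℝ) ^ 2 * b|
      = |(k : ℝ) - 4 * m * √b| * (k + 4 * m * √b) := by
        rw [← abs_of_nonneg (show 0 ≤ (k : ℝ) + 4 * m * √b by positivity), ← abs_mul]
        congr 1
        linear_combination 16 * (m : ℝ) ^ 2 * sq_sqrt b.cast_nonneg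
    _ ≤ θ * (9 * (2 * X * (2 * √B))) := by
        have := m.cast_nonneg.trans hmX
        refine mul_le_mul h.abs_sub_le ?_ (by positivity) hθ0
        exact hsum.trans (by gcongr; exact h.sqrt_le)
    _ = 36 * θ * X * √B := by ring

/-- For fixed `b` the reduced fractions `k / m` lie within `θ / X` of `4 √b`. -/
lemma card_coprime_le_of_spacing (hX : 0 < X) (hθ : 0 ≤ θ)
    (hZ : ∀ x ∈ Z, IsNearPell B θ x.1 x.2.1 x.2.2) (hcop : ∀ x ∈ Z, x.1.Coprime x.2.1)
    (hm : ∀ x ∈ Z, X ≤ x.1 ∧ x.1 < 2 * X) :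
    (#Z : ℝ) ≤ (8 * θ * X + 1) * (3 * B) := by
  have hcard : (#(Ico B (4 * B)) : ℝ) = 3 * B := by
    rw [Nat.card_Ico, show 4 * B - B = 3 * B by omega]
    push_cast
    rfl
  rw [← hcard]
  refine card_le_mul_card_of_fiber_le (f := fun x => x.2.2)
    (fun x hx => mem_Ico.2 ⟨(hZ x hx).le_b, (hZ x hx).b_lt⟩) fun b _ => ?_
  rw [show 8 * θ * X = 2 * θ / X / (2 * X * (2 * X))⁻¹ by field_simp; ring]
  refine card_le_of_pairwise_le_abs_sub (f := fun x : ℕ × ℕ × ℕ => (x.2.1 : ℝ) / x.1)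
    (a := 4 * √b - θ / X) (by positivity) (by positivity) (fun x hx => ?_) fun x hx y hy hne => ?_
  · obtain ⟨hxZ, rfl⟩ := mem_filter.1 hx
    have hm0 : (0 : ℝ) < x.1 := hX.trans_le (hm x hxZ).1
    have : |(x.2.1 : ℝ) / x.1 - 4 * √x.2.2| ≤ θ / X := by
      rw [show (x.2.1 : ℝ) / x.1 - 4 * √x.2.2 = (x.2.1 - 4 * x.1 * √x.2.2) / x.1 by field_simp,
        abs_div, abs_of_pos hm0]
      exact div_le_div₀ hθ (hZ x hxZ).abs_sub_le hX (hm x hxZ).1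
    rw [abs_le] at this
    constructor
    · linarith
    · rw [mul_div_assoc]; linarith
  · obtain ⟨hx, hxb⟩ := mem_filter.1 hx
    obtain ⟨hy, hyb⟩ := mem_filter.1 hy
    have hx0 : (0 : ℝ) < x.1 := hX.trans_le (hm x hx).1
    have hy0 : (0 : ℝ) < y.1 := hX.trans_le (hm y hy).1
    refine le_trans ?_ (inv_le_abs_div_sub_div (mod_cast hx0) (mod_cast hy0) (hcop x hx) (hcop y hy)
      fun h => hne ?_)
    · gcongr
      exacts [(hm x hx).2.le, (hm y hy).2.le]
    · rw [Prod.mk.injEq] at h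
      exact Prod.ext h.1 (Prod.ext h.2 (hxb.trans hyb.symm))

lemma card_le_of_sq_sub_eq {m : ℕ} {e : ℤ} (hB : 0 < B) (hθ : θ ≤ 1) (hm : 0 < m)
    (hZ : ∀ x ∈ Z, IsNearPell B θ x.1 x.2.1 x.2.2) (hcop : ∀ x ∈ Z, x.1.Coprime x.2.1)
    (hZm : ∀ x ∈ Z, x.1 = m)
    (hZe : ∀ x ∈ Z, (x.2.1 : ℤ) ^ 2 - 16 * (x.1 : ℤ) ^ 2 * x.2.2 = e) :
    (#Z : ℝ) ≤ (18 * √B / m + 1) * #(m ^ 2).divisors := by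
  have hinj : Set.InjOn (fun x : ℕ × ℕ × ℕ => x.2.1) Z := by
    intro x hx y hy hxy
    have hm2 : (16 : ℤ) * (m : ℤ) ^ 2 ≠ 0 := by positivity
    have hx' := hZe x hx
    simp only at hxy
    rw [← hZe y hy, hxy, hZm x hx, hZm y hy] at hx'
    have hb : (x.2.2 : ℤ) = y.2.2 := mul_left_cancel₀ hm2 (by linarith)
    exact Prod.ext ((hZm x hx).trans (hZm y hy).symm) (Prod.ext hxy (mod_cast hb))
  have hbound := card_le_of_pairwise_sq_congr (S := Z.image fun x => x.2.1) (q := m ^ 2)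
    (R := 9 * m * √B) (by positivity) (by positivity) ?_ ?_ ?_
  · rw [card_image_of_injOn hinj] at hbound
    convert hbound using 3
    push_cast
    field_simp
    norm_num
  · simp only [forall_mem_image]
    exact fun x hx => hZm x hx ▸ (hZ x hx).cast_k_le hθ hB (hZm x hx ▸ hm)
  · simp only [forall_mem_image]
    exact fun x hx => hZm x hx ▸ (hcop x hx).pow_left 2
  · simp only [forall_mem_image]
    refine fun x hx y hy => ⟨16 * (x.2.2 - y.2.2), ?_⟩
    have hx' := hZe x hx
    have hy' := hZe y hy
    rw [hZm x hx] at hx'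
    rw [hZm y hy] at hy'
    push_cast
    linear_combination hx' - hy'

/-- For fixed `m` and `e = k ^ 2 - 16 b m ^ 2`, the `k` solve a quadratic congruence mod `m ^ 2`. -/
lemma card_coprime_le_of_congr (hB : 0 < B) (hX : 0 < X) (hθ0 : 0 ≤ θ) (hθ : θ ≤ 1)
    (hD : ∀ m : ℕ, m < 2 * X → (#(m ^ 2).divisors : ℝ) ≤ D)
    (hZ : ∀ x ∈ Z, IsNearPell B θ x.1 x.2.1 x.2.2) (hcop : ∀ x ∈ Z, x.1.Coprime x.2.1)
    (hm : ∀ x ∈ Z, X ≤ x.1 ∧ x.1 < 2 * X) :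
    (#Z : ℝ) ≤ (18 * √B / X + 1) * D * (2 * X * (72 * θ * X * √B)) := by
  have hm0 (x) (hx : x ∈ Z) : 0 < x.1 := by exact_mod_cast hX.trans_le (hm x hx).1
  have hD0 : 0 ≤ D := (Nat.cast_nonneg _).trans (hD 0 (by push_cast; positivity))
  set K : ℝ := 36 * θ * X * √B with hK
  set t : Finset (ℕ × ℤ) := Icc 1 ⌊2 * X⌋₊ ×ˢ (Icc (-⌊K⌋) ⌊K⌋).erase 0 with ht
  have htcard : (#t : ℝ) ≤ 2 * X * (72 * θ * X * √B) := by
    rw [card_product, Nat.card_Icc, Nat.add_sub_cancel, Nat.cast_mul]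
    calc (⌊2 * X⌋₊ : ℝ) * #((Icc (-⌊K⌋) ⌊K⌋).erase 0) ≤ 2 * X * (2 * K) := by
          gcongr
          · exact Nat.floor_le (by positivity)
          · exact card_Icc_floor_erase_zero_le (by positivity)
      _ = 2 * X * (72 * θ * X * √B) := by rw [hK]; ring
  refine (card_le_mul_card_of_fiber_le (t := t)
    (f := fun x => (x.1, (x.2.1 : ℤ) ^ 2 - 16 * (x.1 : ℤ) ^ 2 * x.2.2))
    (B := (18 * √B / X + 1) * D) (fun x hx => ?_) ?_).trans (by gcongr)
  · have hle := (hZ x hx).abs_sq_sub_le hθ0 hθ hB (hm0 x hx) (hm x hx).2.le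
    refine mem_product.2 ⟨mem_Icc.2 ⟨hm0 x hx, Nat.le_floor (hm x hx).2.le⟩,
      mem_erase.2 ⟨(hZ x hx).sq_sub_ne_zero, mem_Icc.2 ?_⟩⟩
    rw [abs_le] at hle
    constructor
    · rw [neg_le]
      exact Int.le_floor.2 (by push_cast; linarith)
    · exact Int.le_floor.2 (by push_cast; linarith)
  · rintro ⟨m, e⟩ -
    rcases eq_empty_or_nonempty
      {x ∈ Z | (x.1, (x.2.1 : ℤ) ^ 2 - 16 * (x.1 : ℤ) ^ 2 * x.2.2) = (m, e)} with hF | ⟨x, hx⟩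
    · rw [hF, card_empty, Nat.cast_zero]
      positivity
    obtain ⟨hxZ, hxme⟩ := mem_filter.1 hx
    obtain ⟨rfl, rfl⟩ := Prod.mk.inj hxme
    refine (card_le_of_sq_sub_eq (θ := θ) hB hθ (hm0 x hxZ)
      (fun y hy => hZ y (mem_filter.1 hy).1) (fun y hy => hcop y (mem_filter.1 hy).1)
      (fun y hy => (Prod.mk.inj (mem_filter.1 hy).2).1)
      fun y hy => (Prod.mk.inj (mem_filter.1 hy).2).2).trans ?_
    gcongr
    exacts [(hm x hxZ).1, hD _ (hm x hxZ).2]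

/-- The smaller of the two preceding bounds is at most their weighted geometric mean. -/
lemma card_coprime_le (hB : 0 < B) (hX : 0 < X) (hθ0 : 0 ≤ θ) (hθ : θ ≤ 1) (hD1 : 1 ≤ D)
    (hD : ∀ m : ℕ, m < 2 * X → (#(m ^ 2).divisors : ℝ) ≤ D)
    (hZ : ∀ x ∈ Z, IsNearPell B θ x.1 x.2.1 x.2.2) (hcop : ∀ x ∈ Z, x.1.Coprime x.2.1)
    (hm : ∀ x ∈ Z, X ≤ x.1 ∧ x.1 < 2 * X) :
    (#Z : ℝ) ≤ D * (2616 * θ * X * B + 21 * √θ * X * (B : ℝ) ^ ((3 : ℝ) / 4)) := by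
  have hB' : (0 : ℝ) < B := mod_cast hB
  have hspacing := card_coprime_le_of_spacing hX hθ0 hZ hcop hm
  have hcongr : (#Z : ℝ) ≤ D * (2592 * θ * X * B) + 144 * D * θ * X ^ 2 * √B := by
    refine (card_coprime_le_of_congr hB hX hθ0 hθ hD hZ hcop hm).trans_eq ?_
    have hXX : √(B : ℝ) / X * X = √B := div_mul_cancel₀ _ hX.ne'
    linear_combination 2592 * D * θ * X * (sq_sqrt hB'.le + √B * hXX)
  set r := D * (21 * √θ * X * (B : ℝ) ^ ((3 : ℝ) / 4)) with hr
  have hr0 : 0 ≤ r := by positivity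
  have hθXB0 : 0 ≤ θ * X * B := by positivity
  have hθXB : θ * X * B ≤ D * (θ * X * B) := le_mul_of_one_le_left hθXB0 hD1
  rw [mul_add, ← hr]
  rcases le_or_gt (3 * (B : ℝ)) r with hBr | hBr
  · linarith
  · suffices 144 * D * θ * X ^ 2 * √B ≤ r by linarith
    have hB34 : ((B : ℝ) ^ ((3 : ℝ) / 4)) ^ 2 = B * √B := by
      rw [sqrt_eq_rpow, ← rpow_natCast, ← rpow_mul hB'.le, ← rpow_one_add' hB'.le (by norm_num)]
      norm_num
    have hr2 : 3 * B * (144 * D * θ * X ^ 2 * √B) ≤ r ^ 2 := by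
      calc 3 * B * (144 * D * θ * X ^ 2 * √B) = 432 * D * (θ * X ^ 2 * (B * √B)) := by ring
        _ ≤ 441 * D ^ 2 * (θ * X ^ 2 * (B * √B)) := by gcongr <;> nlinarith
        _ = r ^ 2 := by
          rw [hr, ← hB34]
          linear_combination -441 * D ^ 2 * X ^ 2 * ((B : ℝ) ^ ((3 : ℝ) / 4)) ^ 2 * sq_sqrt hθ0
    refine le_of_mul_le_mul_left (hr2.trans ?_) (by positivity : (0 : ℝ) < 3 * B)
    nlinarith

lemma card_le_of_gcd_eq {j : ℕ} (hj : 0 < j) (hB : 0 < B) (hX : 0 < X) (hθ0 : 0 ≤ θ) (hθ : θ ≤ 1)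
    (hD1 : 1 ≤ D) (hD : ∀ m : ℕ, m < 2 * X → (#(m ^ 2).divisors : ℝ) ≤ D)
    (hZ : ∀ x ∈ Z, IsNearPell B θ x.1 x.2.1 x.2.2) (hgcd : ∀ x ∈ Z, x.1.gcd x.2.1 = j)
    (hm : ∀ x ∈ Z, X ≤ x.1 ∧ x.1 < 2 * X) :
    (#Z : ℝ) ≤ D * (2616 * θ * X * B + 21 * √θ * X * (B : ℝ) ^ ((3 : ℝ) / 4)) * (j : ℝ)⁻¹ := by
  have hj' : (0 : ℝ) < j := mod_cast hj
  have hj1 : (1 : ℝ) ≤ j := mod_cast hj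
  have primitive (x) (hx : x ∈ Z) : ∃ m k, x = (j * m, j * k, x.2.2) ∧ m.Coprime k := by
    obtain ⟨m, k, hmk, hm, hk⟩ := Nat.exists_coprime x.1 x.2.1
    rw [hgcd x hx, mul_comm] at hm hk
    exact ⟨m, k, Prod.ext hm (Prod.ext hk rfl), hmk⟩
  set g : ℕ × ℕ × ℕ → ℕ × ℕ × ℕ := fun x => (x.1 / j, x.2.1 / j, x.2.2)
  have g_apply (m k b : ℕ) : g (j * m, j * k, b) = (m, k, b) := by
    simp only [g, Nat.mul_div_cancel_left _ hj]
  have hinj : Set.InjOn g Z := by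
    intro x hx y hy hxy
    obtain ⟨m, k, hx, -⟩ := primitive x hx
    obtain ⟨m', k', hy, -⟩ := primitive y hy
    rw [hx, hy, g_apply, g_apply, Prod.mk.injEq, Prod.mk.injEq] at hxy
    rw [hx, hy, hxy.1, hxy.2.1, hxy.2.2]
  have hbound := card_coprime_le (Z := Z.image g) (B := B) (X := X / j) (θ := θ / j) (D := D) hB
    (by positivity) (by positivity) ((div_le_self hθ0 hj1).trans hθ) hD1
    (fun m hm => hD m (hm.trans_le (by gcongr; exact div_le_self hX.le hj1))) ?_ ?_ ?_
  · rw [card_image_of_injOn hinj] at hbound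
    refine hbound.trans ?_
    rw [mul_assoc D]
    have hθj : √(θ / j) ≤ √θ := sqrt_le_sqrt (div_le_self hθ0 hj1)
    have hθj' : θ / j ≤ θ := div_le_self hθ0 hj1
    calc D * (2616 * (θ / j) * (X / j) * B + 21 * √(θ / j) * (X / j) * (B : ℝ) ^ ((3 : ℝ) / 4))
        ≤ D * (2616 * θ * (X / j) * B + 21 * √θ * (X / j) * (B : ℝ) ^ ((3 : ℝ) / 4)) := by gcongr
      _ = D * ((2616 * θ * X * B + 21 * √θ * X * (B : ℝ) ^ ((3 : ℝ) / 4)) * (j : ℝ)⁻¹) := by ring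
  all_goals
    simp only [forall_mem_image]
    intro x hx
    obtain ⟨m, k, hxeq, hmk⟩ := primitive x hx
    have hZx := hZ x hx
    have hmx := hm x hx
    rw [hxeq] at hZx hmx ⊢
    rw [g_apply]
  · exact hZx.of_mul hj
  · exact hmk
  · push_cast at hmx
    rw [div_le_iff₀' hj', mul_div_assoc', lt_div_iff₀' hj']
    exact hmx

lemma card_le_of_dyadic (hB : 0 < B) (hX : 1 ≤ X) (hθ0 : 0 ≤ θ) (hθ : θ ≤ 1)
    (hD1 : 1 ≤ D) (hD : ∀ m : ℕ, m < 2 * X → (#(m ^ 2).divisors : ℝ) ≤ D)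
    (hZ : ∀ x ∈ Z, IsNearPell B θ x.1 x.2.1 x.2.2) (hm : ∀ x ∈ Z, X ≤ x.1 ∧ x.1 < 2 * X) :
    (#Z : ℝ) ≤ D * (2616 * θ * X * B + 21 * √θ * X * (B : ℝ) ^ ((3 : ℝ) / 4)) *
      (1 + log (2 * X)) := by
  have hX0 : 0 < X := by linarith
  have hmaps : ∀ x ∈ Z, x.1.gcd x.2.1 ∈ Icc 1 ⌊2 * X⌋₊ := by
    intro x hx
    have hx0 : 0 < x.1 := by exact_mod_cast hX0.trans_le (hm x hx).1
    exact mem_Icc.2 ⟨Nat.gcd_pos_of_pos_left _ hx0,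
      (Nat.gcd_le_left _ hx0).trans (Nat.le_floor (hm x hx).2.le)⟩
  rw [card_eq_sum_card_fiberwise hmaps, Nat.cast_sum]
  set W := D * (2616 * θ * X * B + 21 * √θ * X * (B : ℝ) ^ ((3 : ℝ) / 4))
  calc ∑ j ∈ Icc 1 ⌊2 * X⌋₊, (#{x ∈ Z | x.1.gcd x.2.1 = j} : ℝ)
      ≤ ∑ j ∈ Icc 1 ⌊2 * X⌋₊, W * (j : ℝ)⁻¹ := sum_le_sum fun j hj =>
        card_le_of_gcd_eq (mem_Icc.1 hj).1 hB hX0 hθ0 hθ hD1 hD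
          (fun x hx => hZ x (mem_filter.1 hx).1) (fun x hx => (mem_filter.1 hx).2)
          fun x hx => hm x (mem_filter.1 hx).1
    _ = W * ((harmonic ⌊2 * X⌋₊ : ℚ) : ℝ) := by
        rw [harmonic_eq_sum_Icc, ← mul_sum]
        push_cast
        rfl
    _ ≤ W * (1 + log (2 * X)) := by
        gcongr
        exact harmonic_floor_le_one_add_log _ (by linarith)

lemma m_pos (h : IsNearPell B θ m k b) (hθ : θ < 1) : 0 < m := by
  refine Nat.pos_of_ne_zero ?_
  rintro rfl
  have hk : (k : ℝ) < 1 := by simpa using h.abs_sub_le.trans_lt hθ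
  have hk0 : k = 0 := by exact_mod_cast Nat.lt_one_iff.1 (mod_cast hk)
  exact h.sq_sub_ne_zero (by simp [hk0])

lemma card_le_of_lt_one {Y : ℕ} (hB : 0 < B) (hY : 0 < Y) (hθ0 : 0 ≤ θ) (hθ : θ < 1)
    (hD1 : 1 ≤ D) (hD : ∀ m : ℕ, m < 2 * Y → (#(m ^ 2).divisors : ℝ) ≤ D)
    (hZ : ∀ x ∈ Z, IsNearPell B θ x.1 x.2.1 x.2.2) (hm : ∀ x ∈ Z, x.1 ≤ Y) :
    (#Z : ℝ) ≤ D * (1 + log (2 * Y)) *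
      (5232 * θ * Y * B + 42 * √θ * Y * (B : ℝ) ^ ((3 : ℝ) / 4)) := by
  have hY1 : (1 : ℝ) ≤ Y := mod_cast hY
  have hlog : 0 ≤ log (2 * Y) := log_nonneg (by linarith)
  have hmaps : ∀ x ∈ Z, Nat.log 2 x.1 ∈ range (Nat.log 2 Y + 1) := fun x hx =>
    mem_range_succ_iff.2 (Nat.log_mono_right (hm x hx))
  rw [card_eq_sum_card_fiberwise hmaps, Nat.cast_sum]
  set W := D * (1 + log (2 * Y)) * (2616 * θ * B + 21 * √θ * (B : ℝ) ^ ((3 : ℝ) / 4)) with hW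
  have dyadic_block (i : ℕ) (hi : i ∈ range (Nat.log 2 Y + 1)) :
      (#{x ∈ Z | Nat.log 2 x.1 = i} : ℝ) ≤ W * 2 ^ i := by
    have hiY : (2 : ℝ) ^ i ≤ Y := mod_cast Nat.pow_le_of_le_log hY.ne' (mem_range_succ_iff.1 hi)
    refine (card_le_of_dyadic (X := 2 ^ i) (D := D) hB (one_le_pow₀ one_le_two) hθ0 hθ.le hD1
      (fun m hm => hD m ?_) (fun x hx => hZ x (mem_filter.1 hx).1) fun x hx => ?_).trans ?_
    · have : (m : ℝ) < 2 * Y := by linarith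
      exact_mod_cast this
    · obtain ⟨hxZ, rfl⟩ := mem_filter.1 hx
      have hx0 := ((hZ x hxZ).m_pos hθ).ne'
      have hlt := Nat.lt_pow_succ_log_self one_lt_two x.1
      rw [pow_succ'] at hlt
      exact ⟨mod_cast Nat.pow_log_le_self 2 hx0, mod_cast hlt⟩
    · calc D * (2616 * θ * 2 ^ i * B + 21 * √θ * 2 ^ i * (B : ℝ) ^ ((3 : ℝ) / 4)) *
            (1 + log (2 * 2 ^ i))
          ≤ D * (2616 * θ * 2 ^ i * B + 21 * √θ * 2 ^ i * (B : ℝ) ^ ((3 : ℝ) / 4)) *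
            (1 + log (2 * Y)) := by gcongr
        _ = W * 2 ^ i := by rw [hW]; ring
  have geom : ∑ i ∈ range (Nat.log 2 Y + 1), (2 : ℝ) ^ i ≤ 2 * Y := by
    have hpow : (2 : ℝ) ^ Nat.log 2 Y ≤ Y := mod_cast Nat.pow_log_le_self 2 hY.ne'
    rw [geom_sum_eq (by norm_num), pow_succ']
    linarith
  calc ∑ i ∈ range (Nat.log 2 Y + 1), (#{x ∈ Z | Nat.log 2 x.1 = i} : ℝ)
      ≤ ∑ i ∈ range (Nat.log 2 Y + 1), W * 2 ^ i := sum_le_sum dyadic_block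
    _ ≤ W * (2 * Y) := by rw [← mul_sum]; gcongr
    _ = _ := by rw [hW]; ring

lemma card_le_of_one_le {Y : ℕ} (hY : 0 < Y) (hθ : 1 ≤ θ)
    (hZ : ∀ x ∈ Z, IsNearPell B θ x.1 x.2.1 x.2.2) (hm : ∀ x ∈ Z, x.1 ≤ Y) :
    (#Z : ℝ) ≤ 18 * θ * Y * B := by
  have hY1 : (1 : ℝ) ≤ Y := mod_cast hY
  have hcard : (#(range (Y + 1) ×ˢ Ico B (4 * B)) : ℝ) = (Y + 1) * (3 * B) := by
    rw [card_product, card_range, Nat.card_Ico, show 4 * B - B = 3 * B by omega]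
    push_cast
    rfl
  calc (#Z : ℝ) ≤ (2 * θ / 1 + 1) * #(range (Y + 1) ×ˢ Ico B (4 * B)) := by
        refine card_le_mul_card_of_fiber_le (f := fun x => (x.1, x.2.2)) (fun x hx => mem_product.2
          ⟨mem_range_succ_iff.2 (hm x hx), mem_Ico.2 ⟨(hZ x hx).le_b, (hZ x hx).b_lt⟩⟩) ?_
        rintro ⟨m, b⟩ -
        refine card_le_of_pairwise_le_abs_sub (f := fun x : ℕ × ℕ × ℕ => (x.2.1 : ℝ))
          (a := 4 * m * √b - θ) one_pos (by linarith) (fun x hx => ?_) fun x hx y hy hne => ?_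
        · obtain ⟨hxZ, hxmb⟩ := mem_filter.1 hx
          obtain ⟨rfl, rfl⟩ := Prod.mk.inj hxmb
          have := abs_le.1 (hZ x hxZ).abs_sub_le
          constructor <;> linarith
        · have hmb := (mem_filter.1 hx).2.trans (mem_filter.1 hy).2.symm
          obtain ⟨hmm, hbb⟩ := Prod.mk.inj hmb
          have hkk : (x.2.1 : ℤ) - y.2.1 ≠ 0 := fun h =>
            hne (Prod.ext hmm (Prod.ext (by omega) hbb))
          have := Int.one_le_abs hkk
          exact_mod_cast this
    _ ≤ 3 * θ * (2 * Y * (3 * B)) := by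
        rw [hcard, div_one]
        gcongr <;> linarith
    _ = 18 * θ * Y * B := by ring

theorem card_le {Y : ℕ} (hB : 0 < B) (hY : 0 < Y) (hθ0 : 0 ≤ θ)
    (hD1 : 1 ≤ D) (hD : ∀ m : ℕ, m < 2 * Y → (#(m ^ 2).divisors : ℝ) ≤ D)
    (hZ : ∀ x ∈ Z, IsNearPell B θ x.1 x.2.1 x.2.2) (hm : ∀ x ∈ Z, x.1 ≤ Y) :
    (#Z : ℝ) ≤ D * (1 + log (2 * Y)) *
      (5232 * θ * Y * B + 42 * √θ * Y * (B : ℝ) ^ ((3 : ℝ) / 4)) := by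
  rcases lt_or_ge θ 1 with hθ | hθ
  · exact card_le_of_lt_one hB hY hθ0 hθ hD1 hD hZ hm
  · have hY1 : (1 : ℝ) ≤ Y := mod_cast hY
    have hlog : 0 ≤ log (2 * Y) := log_nonneg (by linarith)
    have hDlog : 1 ≤ D * (1 + log (2 * Y)) := one_le_mul_of_one_le_of_one_le hD1 (by linarith)
    calc (#Z : ℝ) ≤ 18 * θ * Y * B := card_le_of_one_le hY hθ hZ hm
      _ ≤ 1 * (5232 * θ * Y * B + 0) := by linarith [show 0 ≤ θ * Y * B by positivity]
      _ ≤ _ := by gcongr; positivity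

end IsNearPell

end NearPell

section Coincidences

variable {ι κ μ : Type*} [DecidableEq μ]

lemma card_filter_prod_eq_sum {X : Finset ι} {Y : Finset κ} {K : Finset μ} {f : ι → μ} {g : κ → μ}
    (hf : ∀ x ∈ X, f x ∈ K) :
    #{z ∈ X ×ˢ Y | f z.1 = g z.2} = ∑ k ∈ K, #{x ∈ X | f x = k} * #{y ∈ Y | g y = k} := by
  rw [card_eq_sum_card_fiberwise (f := fun z => f z.1) (t := K)
    fun z hz => hf _ (mem_product.mp (mem_filter.mp hz).1).1]
  refine sum_congr rfl fun k _ => ?_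
  rw [← card_product]
  congr 1
  ext z
  simp only [mem_filter, mem_product]
  grind

lemma card_filter_prod_eq_sq_le (X : Finset ι) (Y : Finset κ) (f : ι → μ) (g : κ → μ) :
    #{z ∈ X ×ˢ Y | f z.1 = g z.2} ^ 2 ≤
      #{z ∈ X ×ˢ X | f z.1 = f z.2} * #{z ∈ Y ×ˢ Y | g z.1 = g z.2} := by
  have hf : ∀ x ∈ X, f x ∈ X.image f ∪ Y.image g := fun x hx =>
    mem_union_left _ (mem_image_of_mem f hx)
  have hg : ∀ y ∈ Y, g y ∈ X.image f ∪ Y.image g := fun y hy =>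
    mem_union_right _ (mem_image_of_mem g hy)
  rw [card_filter_prod_eq_sum hf, card_filter_prod_eq_sum hf, card_filter_prod_eq_sum hg]
  simp only [← sq]
  exact sum_mul_sq_le_sq_mul_sq _ _ _

lemma card_filter_prod_eq_le_card_mul {ν : Type*} [DecidableEq ν] {X : Finset ι} {G : Finset ν}
    (f : ι → μ) {h : ι → ν} (hG : ∀ x ∈ X, h x ∈ G) :
    #{z ∈ X ×ˢ X | f z.1 = f z.2} ≤ #G * #{z ∈ X ×ˢ X | f z.1 = f z.2 ∧ h z.1 = h z.2} := by
  have hf : ∀ x ∈ X, f x ∈ X.image f := fun x hx => mem_image_of_mem f hx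
  have hfh : ∀ x ∈ X, (f x, h x) ∈ X.image f ×ˢ G := fun x hx => mem_product.mpr ⟨hf x hx, hG x hx⟩
  have hrefined := card_filter_prod_eq_sum (Y := X) (g := fun x => (f x, h x)) hfh
  simp only [Prod.mk.injEq] at hrefined
  rw [card_filter_prod_eq_sum hf, hrefined, sum_product, mul_sum]
  refine sum_le_sum fun k _ => ?_
  have hk : #{x ∈ X | f x = k} = ∑ l ∈ G, #{x ∈ X | f x = k ∧ h x = l} := by
    simp only [← filter_filter]
    exact card_eq_sum_card_fiberwise fun x hx => hG x (mem_filter.mp hx).1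
  simp only [hk, ← sq, Prod.mk.injEq]
  exact_mod_cast sq_sum_le_card_mul_sum_sq (α := ℕ)

end Coincidences

section SquareRootSpacing

/-- The dyadic block `[N, 2N)`. -/
abbrev dyadicBlock (N : ℕ) : Finset ℕ := Ico N (2 * N)

lemma card_dyadicBlock (N : ℕ) : #(dyadicBlock N) = N := by
  rw [Nat.card_Ico]
  omega

variable {N a b : ℕ}

lemma sqrt_le_of_mem_dyadicBlock (ha : a ∈ dyadicBlock N) : √(a : ℝ) ≤ 3 / 2 * √N := by
  have ha' : (a : ℝ) ≤ 2 * N := by exact_mod_cast (mem_Ico.mp ha).2.le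
  rw [Real.sqrt_le_left (by positivity), mul_pow, Real.sq_sqrt N.cast_nonneg]
  linarith

lemma sqrt_add_sqrt_le_of_mem_dyadicBlock (ha : a ∈ dyadicBlock N) (hb : b ∈ dyadicBlock N) :
    √(a : ℝ) + √b ≤ 3 * √N := by
  linarith [sqrt_le_of_mem_dyadicBlock ha, sqrt_le_of_mem_dyadicBlock hb]

lemma sqrt_le_sqrt_of_mem_dyadicBlock (ha : a ∈ dyadicBlock N) : √(N : ℝ) ≤ √a :=
  Real.sqrt_le_sqrt (by exact_mod_cast (mem_Ico.mp ha).1)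

lemma pos_of_mem_dyadicBlock (ha : a ∈ dyadicBlock N) : 0 < N := by
  have := mem_Ico.mp ha
  omega

lemma cast_sub_cast_eq_sqrt (a b : ℕ) : (b : ℝ) - a = (√b - √a) * (√b + √a) := by
  linear_combination Real.sq_sqrt a.cast_nonneg - Real.sq_sqrt b.cast_nonneg

lemma inv_le_sqrt_sub_sqrt (ha : a ∈ dyadicBlock N) (hb : b ∈ dyadicBlock N) (hab : a < b) :
    1 / (3 * √N) ≤ √(b : ℝ) - √a := by
  have hN : (0 : ℝ) < N := by exact_mod_cast pos_of_mem_dyadicBlock ha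
  have hab' : (a : ℝ) + 1 ≤ b := by exact_mod_cast hab
  have hle : √(a : ℝ) ≤ √b := Real.sqrt_le_sqrt (by linarith)
  rw [div_le_iff₀ (by positivity)]
  calc (1 : ℝ) ≤ (√b - √a) * (√b + √a) := by rw [← cast_sub_cast_eq_sqrt]; linarith
    _ ≤ (√b - √a) * (3 * √N) := by
        gcongr
        exact sqrt_add_sqrt_le_of_mem_dyadicBlock hb ha

lemma inv_le_abs_sqrt_sub_sqrt (ha : a ∈ dyadicBlock N) (hb : b ∈ dyadicBlock N) (hab : a ≠ b) :
    1 / (3 * √N) ≤ |√(a : ℝ) - √b| := by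
  rcases lt_or_gt_of_ne hab with h | h
  · rw [abs_sub_comm]
    exact (inv_le_sqrt_sub_sqrt ha hb h).trans (le_abs_self _)
  · exact (inv_le_sqrt_sub_sqrt hb ha h).trans (le_abs_self _)

lemma le_sqrt_add_sub_sqrt_sub {t : ℕ} (ha : a ∈ dyadicBlock N) (hb : b ∈ dyadicBlock N)
    (hat : a + t ∈ dyadicBlock N) (hbt : b + t ∈ dyadicBlock N) (hab : a < b) :
    2 * t / (27 * (N * √N)) ≤ (√(a + t : ℕ) - √a) - (√(b + t : ℕ) - √(b : ℝ)) := by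
  have hN : (0 : ℝ) < √N := Real.sqrt_pos.mpr (by exact_mod_cast pos_of_mem_dyadicBlock ha)
  have hsub (c : ℕ) (hc : c ∈ dyadicBlock N) :
      √(c + t : ℕ) - √c = t / (√(c + t : ℕ) + √c) := by
    have := hN.trans_le (sqrt_le_sqrt_of_mem_dyadicBlock hc)
    rw [eq_div_iff (by positivity), ← cast_sub_cast_eq_sqrt]
    push_cast
    ring
  have hgap := inv_le_sqrt_sub_sqrt ha hb hab
  have hgapt := inv_le_sqrt_sub_sqrt hat hbt (by omega)
  have hgap0 : 0 < 1 / (3 * √(N : ℝ)) := by positivity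
  have ha0 := hN.trans_le (sqrt_le_sqrt_of_mem_dyadicBlock ha)
  have hb0 := hN.trans_le (sqrt_le_sqrt_of_mem_dyadicBlock hb)
  rw [hsub a ha, hsub b hb, div_sub_div _ _ (by positivity) (by positivity)]
  calc (2 * t / (27 * (N * √N)) : ℝ)
      = t * (1 / (3 * √N) + 1 / (3 * √N)) / ((3 * √N) * (3 * √N)) := by
        rw [← Real.mul_self_sqrt N.cast_nonneg]
        simp only [Real.sqrt_mul_self (Real.sqrt_nonneg _)]
        field_simp
        ring
    _ ≤ t * ((√(b + t : ℕ) - √(a + t : ℕ)) + (√b - √a)) /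
          ((√(a + t : ℕ) + √a) * (√(b + t : ℕ) + √b)) := by
        gcongr
        · exact mul_nonneg t.cast_nonneg (by linarith)
        · exact sqrt_add_sqrt_le_of_mem_dyadicBlock hat ha
        · exact sqrt_add_sqrt_le_of_mem_dyadicBlock hbt hb
    _ = _ := by ring

lemma sub_bounds_of_abs_sqrt_sub_sqrt_sub_le {c Δ : ℝ} (hΔ : 0 ≤ Δ) (hc : 2 * Δ ≤ c)
    (ha : a ∈ dyadicBlock N) (hb : b ∈ dyadicBlock N) (h : |√(b : ℝ) - √a - c| ≤ Δ) :
    c * √N ≤ (b : ℝ) - a ∧ (b : ℝ) - a ≤ 5 * c * √N := by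
  have hb1 := sqrt_le_sqrt_of_mem_dyadicBlock hb
  have ha1 := sqrt_le_sqrt_of_mem_dyadicBlock ha
  rw [abs_le] at h
  rw [cast_sub_cast_eq_sqrt]
  constructor
  · calc c * √N = c / 2 * (√N + √N) := by ring
      _ ≤ _ := by gcongr <;> linarith
  · have hc0 : 0 ≤ c := by linarith
    calc (√(b : ℝ) - √a) * (√b + √a) ≤ 3 / 2 * c * (3 * √N) := by
          gcongr
          · linarith
          · exact sqrt_add_sqrt_le_of_mem_dyadicBlock hb ha
      _ = 9 / 2 * c * √N := by ring
      _ ≤ 5 * c * √N := by gcongr; norm_num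

end SquareRootSpacing

section AdditiveEnergy

variable {N P : ℕ} {Δ : ℝ}

lemma card_le_of_sub_eq_of_sqrt_sub_sqrt_near {c : ℝ} {t : ℕ} (hN : 0 < N) (hc : 0 < c)
    (hΔ : 0 ≤ Δ) (ht : c * √N ≤ t) {S : Finset (ℕ × ℕ)}
    (hS : ∀ x ∈ S, x.1 ∈ dyadicBlock N ∧ x.2 ∈ dyadicBlock N ∧ x.2 = x.1 + t ∧
      |√(x.2 : ℝ) - √(x.1 : ℝ) - c| ≤ Δ) :
    (#S : ℝ) ≤ 27 * Δ * N / c + 1 := by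
  have : (0 : ℝ) < N := by exact_mod_cast hN
  have hsep : (S : Set (ℕ × ℕ)).Pairwise fun x y =>
      2 * c / (27 * N) ≤ |(√(x.2 : ℝ) - √x.1) - (√(y.2 : ℝ) - √y.1)| := by
    intro x hx y hy hne
    wlog hxy : x.1 < y.1 generalizing x y
    · rw [abs_sub_comm]
      refine this hy hx hne.symm (lt_of_le_of_ne (not_lt.mp hxy) fun h => hne ?_)
      exact Prod.ext h.symm (by rw [(hS x hx).2.2.1, (hS y hy).2.2.1, h])
    obtain ⟨hx1, hx2, hxt, -⟩ := hS x hx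
    obtain ⟨hy1, hy2, hyt, -⟩ := hS y hy
    rw [hxt] at hx2 ⊢
    rw [hyt] at hy2 ⊢
    calc 2 * c / (27 * N) = 2 * (c * √N) / (27 * (N * √N)) := by field_simp
      _ ≤ 2 * t / (27 * (N * √N)) := by gcongr
      _ ≤ _ := (le_sqrt_add_sub_sqrt_sub hx1 hy1 hx2 hy2 hxy).trans (le_abs_self _)
  have hcard := card_le_of_pairwise_le_abs_sub (s := S) (f := fun x => √(x.2 : ℝ) - √x.1)
    (a := c - Δ) (L := 2 * Δ) (by positivity) (by positivity)
    (fun x hx => by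
      have := abs_le.mp (hS x hx).2.2.2
      constructor <;> linarith) hsep
  refine hcard.trans_eq ?_
  field_simp

lemma card_sqrt_sub_sqrt_near_le_of_pos {c : ℝ} (hΔ : 0 ≤ Δ) (hc0 : 0 < c) (hc : 2 * Δ ≤ c) :
    (#{x ∈ dyadicBlock N ×ˢ dyadicBlock N | |√(x.2 : ℝ) - √(x.1 : ℝ) - c| ≤ Δ} : ℝ) ≤
      5 * c * √N + 135 * Δ * N * √N := by
  rcases N.eq_zero_or_pos with rfl | hN
  · simp
  have : (0 : ℝ) < N := by exact_mod_cast hN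
  set S := {x ∈ dyadicBlock N ×ˢ dyadicBlock N | |√(x.2 : ℝ) - √(x.1 : ℝ) - c| ≤ Δ}
  have hmem (x : ℕ × ℕ) (hx : x ∈ S) : x.1 ∈ dyadicBlock N ∧ x.2 ∈ dyadicBlock N ∧
      |√(x.2 : ℝ) - √(x.1 : ℝ) - c| ≤ Δ := by
    obtain ⟨hx, h⟩ := mem_filter.mp hx
    exact ⟨(mem_product.mp hx).1, (mem_product.mp hx).2, h⟩
  have hdiff (x : ℕ × ℕ) (hx : x ∈ S) : x.1 < x.2 ∧
      c * √N ≤ (x.2 - x.1 : ℕ) ∧ ((x.2 - x.1 : ℕ) : ℝ) ≤ 5 * c * √N := by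
    obtain ⟨h1, h2, h⟩ := hmem x hx
    have hb := sub_bounds_of_abs_sqrt_sub_sqrt_sub_le hΔ hc h1 h2 h
    have hlt : x.1 < x.2 := by
      have := (by positivity : 0 < c * √N).trans_le hb.1
      exact_mod_cast sub_pos.mp this
    exact ⟨hlt, by rwa [Nat.cast_sub hlt.le]⟩
  have hfiber (t : ℕ) : (#{x ∈ S | x.2 - x.1 = t} : ℝ) ≤ 27 * Δ * N / c + 1 := by
    rcases Finset.eq_empty_or_nonempty {x ∈ S | x.2 - x.1 = t} with h | ⟨z, hz⟩
    · rw [h, card_empty, Nat.cast_zero]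
      positivity
    obtain ⟨hzS, rfl⟩ := mem_filter.mp hz
    refine card_le_of_sub_eq_of_sqrt_sub_sqrt_near hN hc0 hΔ (hdiff z hzS).2.1 fun x hx => ?_
    obtain ⟨hxS, hxt⟩ := mem_filter.mp hx
    obtain ⟨h1, h2, h⟩ := hmem x hxS
    have := (hdiff x hxS).1
    exact ⟨h1, h2, by omega, h⟩
  have hmaps : ∀ x ∈ S, x.2 - x.1 ∈ Icc 1 ⌊5 * c * √(N : ℝ)⌋₊ := fun x hx => by
    obtain ⟨hlt, -, hle⟩ := hdiff x hx
    exact mem_Icc.mpr ⟨by omega, Nat.le_floor hle⟩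
  calc (#S : ℝ) ≤ (27 * Δ * N / c + 1) * #(Icc 1 ⌊5 * c * √(N : ℝ)⌋₊) :=
        card_le_mul_card_of_fiber_le hmaps fun t _ => hfiber t
    _ ≤ (27 * Δ * N / c + 1) * (5 * c * √N) := by
        rw [Nat.card_Icc, Nat.add_sub_cancel]
        gcongr
        exact Nat.floor_le (by positivity)
    _ = 5 * c * √N + 135 * Δ * N * √N := by
        field_simp
        ring

lemma card_sqrt_sub_sqrt_near_le {c : ℝ} (hΔ : 0 ≤ Δ) (hc0 : c ≠ 0) (hc : 2 * Δ ≤ |c|) :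
    (#{x ∈ dyadicBlock N ×ˢ dyadicBlock N | |√(x.2 : ℝ) - √(x.1 : ℝ) - c| ≤ Δ} : ℝ) ≤
      5 * |c| * √N + 135 * Δ * N * √N := by
  rcases hc0.lt_or_gt with h | h
  · rw [abs_of_neg h] at hc ⊢
    refine le_trans (Nat.cast_le.mpr ?_) (card_sqrt_sub_sqrt_near_le_of_pos hΔ (neg_pos.mpr h) hc)
    refine card_le_card_of_injOn Prod.swap (fun x hx => ?_) Prod.swap_injective.injOn
    simp only [coe_filter, mem_product, Set.mem_ofPred_eq, Prod.fst_swap, Prod.snd_swap] at hx ⊢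
    refine ⟨hx.1.symm, ?_⟩
    rw [abs_sub_comm] at hx
    refine (congrArg abs ?_).trans_le hx.2
    ring
  · rw [abs_of_pos h] at hc ⊢
    exact card_sqrt_sub_sqrt_near_le_of_pos hΔ h hc

lemma card_sqrt_near_le (hN : 0 < N) (hΔ : 3 * Δ * √N < 1) :
    #{x ∈ dyadicBlock N ×ˢ dyadicBlock N | |√(x.2 : ℝ) - √(x.1 : ℝ)| ≤ Δ} ≤ N := by
  have : (0 : ℝ) < N := by exact_mod_cast hN
  calc _ ≤ #(dyadicBlock N).diag := card_le_card fun x hx => ?_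
    _ = N := by rw [diag_card, card_dyadicBlock]
  simp only [mem_filter, mem_product] at hx
  refine mem_diag.mpr ⟨hx.1.1, ?_⟩
  by_contra hne
  have hgap := (inv_le_abs_sqrt_sub_sqrt hx.1.2 hx.1.1 (Ne.symm hne)).trans hx.2
  rw [div_le_iff₀ (by positivity)] at hgap
  linarith

lemma card_filter_div_eq_le {s : ℕ} (hs : 0 < s) (A : Finset ℕ) :
    #{q ∈ A ×ˢ A | q.1 / s = q.2 / s} ≤ s * #A := by
  calc _ ≤ #(A ×ˢ range s) := by
        refine card_le_card_of_injOn (fun q => (q.1, q.2 % s)) (fun q hq => ?_) ?_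
        · have hq := mem_filter.mp hq
          exact mem_product.mpr ⟨(mem_product.mp hq.1).1, mem_range.mpr (Nat.mod_lt _ hs)⟩
        · intro q hq r hr hqr
          have hq := (mem_filter.mp hq).2
          have hr := (mem_filter.mp hr).2
          obtain ⟨h1, h2⟩ := Prod.mk.inj hqr
          refine Prod.ext h1 ?_
          rw [← Nat.div_add_mod q.2 s, ← Nat.div_add_mod r.2 s, h2, ← hq, ← hr, h1]
    _ = s * #A := by rw [card_product, card_range, mul_comm]

lemma abs_sqrt_sub_sqrt_le_half {s p q : ℕ} (hs : 0 < s) (hsP : s ^ 2 ≤ P)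
    (hp : p ∈ dyadicBlock P) (hq : q ∈ dyadicBlock P) (hpq : p / s = q / s) :
    |√(p : ℝ) - √q| ≤ 1 / 2 := by
  have hP : (0 : ℝ) < √P := Real.sqrt_pos.mpr (by exact_mod_cast pos_of_mem_dyadicBlock hp)
  have hdiff : |(p : ℝ) - q| ≤ √P := by
    have : |(p : ℤ) - q| ≤ s := by
      have h1 := Nat.div_add_mod p s
      have h2 := Nat.div_add_mod q s
      have h3 := Nat.mod_lt p hs
      have h4 := Nat.mod_lt q hs
      rw [hpq] at h1
      rw [abs_le]
      constructor <;> omega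
    calc |(p : ℝ) - q| ≤ s := by exact_mod_cast this
      _ ≤ √P := Real.le_sqrt_of_sq_le (by exact_mod_cast hsP)
  have hp1 := sqrt_le_sqrt_of_mem_dyadicBlock hp
  have hq1 := sqrt_le_sqrt_of_mem_dyadicBlock hq
  rw [cast_sub_cast_eq_sqrt, abs_mul, abs_of_nonneg (a := √(p : ℝ) + √q) (by positivity)] at hdiff
  have : |√(p : ℝ) - √q| * (2 * √P) ≤ √P := by
    refine le_trans ?_ hdiff
    gcongr
    linarith
  rw [← le_div_iff₀ (by positivity)] at this
  refine this.trans_eq ?_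
  field_simp

/-- The index `⌊(a√n + b√p) / Δ⌋` of the cell of length `Δ` containing `a√n + b√p`. Two pairs in
the same cell give values of this form at most `Δ` apart. -/
def sqrtCell (Δ a b : ℝ) (x : ℕ × ℕ) : ℤ := ⌊(a * √x.1 + b * √x.2) / Δ⌋

variable {a b : ℝ}

lemma abs_sub_le_of_floor_div_eq {u v : ℝ} (hΔ : 0 < Δ) (h : ⌊u / Δ⌋ = ⌊v / Δ⌋) :
    |u - v| ≤ Δ := by
  have := Int.abs_sub_lt_one_of_floor_eq_floor h
  rw [← sub_div, abs_div, abs_of_pos hΔ, div_lt_one hΔ] at this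
  exact this.le

lemma abs_le_of_sqrtCell_eq {x y : ℕ × ℕ} (hΔ : 0 < Δ) (ha : |a| = 1)
    (h : sqrtCell Δ a b x = sqrtCell Δ a b y) :
    |√(y.1 : ℝ) - √(x.1 : ℝ) - a * b * (√(x.2 : ℝ) - √(y.2 : ℝ))| ≤ Δ := by
  have ha2 : a * a = 1 := by rw [← abs_mul_abs_self, ha, one_mul]
  calc _ = |-a * ((a * √x.1 + b * √x.2) - (a * √y.1 + b * √y.2))| := by
        congr 1
        linear_combination (√(x.1 : ℝ) - √(y.1 : ℝ)) * ha2
    _ ≤ Δ := by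
        rw [abs_mul, abs_neg, ha, one_mul]
        exact abs_sub_le_of_floor_div_eq hΔ h

lemma card_sqrtCell_eq_fiber_le (hΔ : 0 < Δ) (ha : |a| = 1) (A : Finset ℕ)
    {S : Finset ((ℕ × ℕ) × ℕ × ℕ)} {q : ℕ × ℕ}
    (hS : ∀ z ∈ S, z.1.1 ∈ A ∧ z.2.1 ∈ A ∧ sqrtCell Δ a b z.1 = sqrtCell Δ a b z.2 ∧
      (z.1.2, z.2.2) = q) :
    #S ≤ #{x ∈ A ×ˢ A | |√(x.2 : ℝ) - √(x.1 : ℝ) - a * b * (√(q.1 : ℝ) - √(q.2 : ℝ))| ≤ Δ} := by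
  refine card_le_card_of_injOn (fun z => (z.1.1, z.2.1)) (fun z hz => ?_) fun z hz w hw hzw => ?_
  · obtain ⟨h1, h2, h, rfl⟩ := hS z hz
    exact mem_filter.mpr ⟨mem_product.mpr ⟨h1, h2⟩, abs_le_of_sqrtCell_eq hΔ ha h⟩
  · have h := (hS z hz).2.2.2.trans (hS w hw).2.2.2.symm
    simp only [Prod.mk.injEq] at h hzw
    exact Prod.ext (Prod.ext hzw.1 h.1) (Prod.ext hzw.2 h.2)

lemma card_sqrtCell_eq_fiber_le_ite {s : ℕ} (hs : 0 < s) (hsP : s ^ 2 ≤ P) (hPN : P ≤ N)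
    (hΔ : 0 < Δ) (hΔN : 8 * Δ * √N < 1) (ha : |a| = 1) (hb : |b| = 1) {q : ℕ × ℕ}
    (hq1 : q.1 ∈ dyadicBlock P) (hq2 : q.2 ∈ dyadicBlock P) (hq : q.1 / s = q.2 / s) :
    (#{x ∈ dyadicBlock N ×ˢ dyadicBlock N |
      |√(x.2 : ℝ) - √(x.1 : ℝ) - a * b * (√(q.1 : ℝ) - √(q.2 : ℝ))| ≤ Δ} : ℝ) ≤
      (if q.1 = q.2 then (N : ℝ) else 0) + (3 * √N + 135 * Δ * N * √N) := by
  have hP := pos_of_mem_dyadicBlock hq1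
  have hN := hP.trans_le hPN
  split_ifs with hne
  · simp only [hne, sub_self, mul_zero, sub_zero]
    refine (Nat.cast_le.mpr (card_sqrt_near_le hN ?_)).trans
      (le_add_of_nonneg_right (by positivity))
    nlinarith [mul_nonneg hΔ.le (Real.sqrt_nonneg N)]
  · have habs : |a * b * (√(q.1 : ℝ) - √(q.2 : ℝ))| = |√(q.1 : ℝ) - √(q.2 : ℝ)| := by
      rw [abs_mul, abs_mul, ha, hb, one_mul, one_mul]
    have hgap := inv_le_abs_sqrt_sub_sqrt hq1 hq2 hne
    have : 0 < √(P : ℝ) := Real.sqrt_pos.mpr (by exact_mod_cast hP)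
    have hΔP : 2 * Δ ≤ 1 / (3 * √(P : ℝ)) := by
      have : Δ * √P ≤ Δ * √N := by gcongr
      rw [le_div_iff₀ (by positivity)]
      linarith
    have hc : 2 * Δ ≤ |a * b * (√(q.1 : ℝ) - √(q.2 : ℝ))| := by
      rw [habs]
      exact hΔP.trans hgap
    have hle := abs_sqrt_sub_sqrt_le_half hs hsP hq1 hq2 hq
    refine (card_sqrt_sub_sqrt_near_le hΔ.le (abs_pos.mp (by linarith)) hc).trans ?_
    rw [habs, zero_add]
    gcongr
    linarith

lemma card_sqrtCell_eq_of_div_eq_le {s : ℕ} (hs : 0 < s) (hsP : s ^ 2 ≤ P) (hPN : P ≤ N)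
    (hΔ : 0 < Δ) (hΔN : 8 * Δ * √N < 1) (ha : |a| = 1) (hb : |b| = 1) :
    (#{z ∈ (dyadicBlock N ×ˢ dyadicBlock P) ×ˢ (dyadicBlock N ×ˢ dyadicBlock P) |
      sqrtCell Δ a b z.1 = sqrtCell Δ a b z.2 ∧ z.1.2 / s = z.2.2 / s} : ℝ) ≤
      4 * (N * P) + 135 * Δ * (P * √P) * (N * √N) := by
  set S := {z ∈ (dyadicBlock N ×ˢ dyadicBlock P) ×ˢ (dyadicBlock N ×ˢ dyadicBlock P) |
    sqrtCell Δ a b z.1 = sqrtCell Δ a b z.2 ∧ z.1.2 / s = z.2.2 / s} with hS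
  set Q := {q ∈ dyadicBlock P ×ˢ dyadicBlock P | q.1 / s = q.2 / s} with hQ
  have hmaps : ∀ z ∈ S, (z.1.2, z.2.2) ∈ Q := fun z hz => by
    simp only [hS, hQ, mem_filter, mem_product] at hz ⊢
    exact ⟨⟨hz.1.1.2, hz.1.2.2⟩, hz.2.2⟩
  have hdiag : #{q ∈ Q | q.1 = q.2} ≤ P := by
    refine (card_le_card fun q hq => ?_).trans_eq
      ((diag_card (dyadicBlock P)).trans (card_dyadicBlock P))
    simp only [hQ, mem_filter, mem_product] at hq
    exact mem_diag.mpr ⟨hq.1.1.1, hq.2⟩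
  have hQcard : (#Q : ℝ) ≤ √P * P := by
    have : (#Q : ℝ) ≤ s * P := by
      have := card_filter_div_eq_le hs (dyadicBlock P)
      rw [card_dyadicBlock] at this
      exact_mod_cast this
    refine this.trans ?_
    gcongr
    exact Real.le_sqrt_of_sq_le (by exact_mod_cast hsP)
  have hfiber (q : ℕ × ℕ) (hq : q ∈ Q) : (#{z ∈ S | (z.1.2, z.2.2) = q} : ℝ) ≤
      (if q.1 = q.2 then (N : ℝ) else 0) + (3 * √N + 135 * Δ * N * √N) := by
    simp only [hQ, mem_filter, mem_product] at hq
    refine le_trans (Nat.cast_le.mpr (card_sqrtCell_eq_fiber_le hΔ ha (dyadicBlock N) ?_))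
      (card_sqrtCell_eq_fiber_le_ite hs hsP hPN hΔ hΔN ha hb hq.1.1 hq.1.2 hq.2)
    intro z hz
    simp only [hS, mem_filter, mem_product] at hz
    exact ⟨hz.1.1.1.1, hz.1.1.2.1, hz.1.2.1, hz.2⟩
  calc (#S : ℝ) = ∑ q ∈ Q, (#{z ∈ S | (z.1.2, z.2.2) = q} : ℝ) := by
        rw [card_eq_sum_card_fiberwise hmaps, Nat.cast_sum]
    _ ≤ N * #{q ∈ Q | q.1 = q.2} + (3 * √N + 135 * Δ * N * √N) * #Q := by
        refine (sum_le_sum hfiber).trans_eq ?_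
        rw [sum_add_distrib, ← sum_filter, sum_const, sum_const, nsmul_eq_mul, nsmul_eq_mul,
          mul_comm, mul_comm (#Q : ℝ)]
    _ ≤ N * P + (3 * √N + 135 * Δ * N * √N) * (√P * P) := by gcongr
    _ = N * P + 3 * (√P * √N * P) + 135 * Δ * (P * √P) * (N * √N) := by ring
    _ ≤ N * P + 3 * (√N * √N * P) + 135 * Δ * (P * √P) * (N * √N) := by gcongr
    _ = 4 * (N * P) + 135 * Δ * (P * √P) * (N * √N) := by
        rw [Real.mul_self_sqrt N.cast_nonneg]
        ring

/-- Cutting the block `[P, 2P)` into about `√P` pieces of length about `√P` keeps `|√p - √p'|`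
bounded inside each piece; Cauchy–Schwarz reduces the general count to pairs in a common piece. -/
lemma card_sqrtCell_eq_le (hP : 0 < P) (hPN : P ≤ N) (hΔ : 0 < Δ) (hΔN : 8 * Δ * √N < 1)
    (ha : |a| = 1) (hb : |b| = 1) :
    (#{z ∈ (dyadicBlock N ×ˢ dyadicBlock P) ×ˢ (dyadicBlock N ×ˢ dyadicBlock P) |
      sqrtCell Δ a b z.1 = sqrtCell Δ a b z.2} : ℝ) ≤
      20 * (N * (P * √P)) + 675 * Δ * P ^ 2 * (N * √N) := by
  set s := Nat.sqrt P
  have hs : 0 < s := Nat.sqrt_pos.mpr hP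
  have hsP : s ^ 2 ≤ P := Nat.sqrt_le' P
  have hblocks : ∀ x ∈ dyadicBlock N ×ˢ dyadicBlock P, x.2 / s ∈ range (2 * P / s + 1) :=
    fun x hx => mem_range_succ_iff.mpr
      (Nat.div_le_div_right (mem_Ico.mp (mem_product.mp hx).2).2.le)
  have hcount : ((2 * P / s + 1 : ℕ) : ℝ) ≤ 5 * √P := by
    have hP1 : 1 ≤ √(P : ℝ) := Real.one_le_sqrt.mpr (by exact_mod_cast hP)
    have hsqrt : √(P : ℝ) ≤ 2 * s := by
      have : P < (s + 1) ^ 2 := Nat.lt_succ_sqrt' P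
      rw [Real.sqrt_le_left (by positivity)]
      exact_mod_cast (by nlinarith : P ≤ (2 * s) ^ 2)
    have hdiv : ((2 * P / s : ℕ) : ℝ) ≤ 4 * √P := by
      refine Nat.cast_div_le.trans ?_
      rw [div_le_iff₀ (by exact_mod_cast hs)]
      push_cast
      nlinarith [Real.mul_self_sqrt P.cast_nonneg]
    push_cast at hdiv ⊢
    linarith
  have hrefine := card_filter_prod_eq_le_card_mul (sqrtCell Δ a b) hblocks
  rw [card_range] at hrefine
  calc _ ≤ ((2 * P / s + 1 : ℕ) : ℝ) * #{z ∈ (dyadicBlock N ×ˢ dyadicBlock P) ×ˢ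
          (dyadicBlock N ×ˢ dyadicBlock P) |
          sqrtCell Δ a b z.1 = sqrtCell Δ a b z.2 ∧ z.1.2 / s = z.2.2 / s} := by
        exact_mod_cast hrefine
    _ ≤ 5 * √P * (4 * (N * P) + 135 * Δ * (P * √P) * (N * √N)) := by
        gcongr
        exact card_sqrtCell_eq_of_div_eq_le hs hsP hPN hΔ hΔN ha hb
    _ = 20 * (N * (P * √P)) + 675 * Δ * (√P * √P * P) * (N * √N) := by ring
    _ = _ := by
        rw [Real.mul_self_sqrt P.cast_nonneg]
        ring

end AdditiveEnergy

section NearZeroBox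

/-- The linear form `∑ j, s j * √(n j)` in square roots; `alphaNI` is the case of four variables and
signs `s j = ±1`. -/
def sqrtForm {ι : Type*} [Fintype ι] (s : ι → ℝ) (n : ι → ℕ) : ℝ := ∑ j, s j * √(n j)

/-- The integer points of the dyadic box `∏ j, [N j, 2 N j)` at which the form `sqrtForm s` is
nonzero and at most `Δ` in absolute value. -/
def nearZeroBox {ι : Type*} [Fintype ι] [DecidableEq ι] (s : ι → ℝ) (N : ι → ℕ) (Δ : ℝ) :
    Finset (ι → ℕ) :=
  {n ∈ Fintype.piFinset fun j => dyadicBlock (N j) | sqrtForm s n ≠ 0 ∧ |sqrtForm s n| ≤ Δ}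

variable {ι : Type*} [Fintype ι] {k : ℕ} {Δ : ℝ}

lemma mem_nearZeroBox [DecidableEq ι] {s : ι → ℝ} {N n : ι → ℕ} :
    n ∈ nearZeroBox s N Δ ↔
      (∀ j, n j ∈ dyadicBlock (N j)) ∧ sqrtForm s n ≠ 0 ∧ |sqrtForm s n| ≤ Δ := by
  rw [nearZeroBox, mem_filter, Fintype.mem_piFinset]

lemma sqrtForm_comp_equiv (e : ι ≃ ι) (s : ι → ℝ) (n : ι → ℕ) :
    sqrtForm (s ∘ e) (n ∘ e) = sqrtForm s n :=
  e.sum_comp fun j => s j * √(n j : ℝ)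

lemma card_nearZeroBox_comp_equiv [DecidableEq ι] (e : ι ≃ ι) (s : ι → ℝ) (N : ι → ℕ) (Δ : ℝ) :
    #(nearZeroBox (s ∘ e) (N ∘ e) Δ) = #(nearZeroBox s N Δ) := by
  symm
  refine card_equiv (e.symm.arrowCongr (Equiv.refl ℕ)) fun n => ?_
  have : e.symm.arrowCongr (Equiv.refl ℕ) n = n ∘ e := rfl
  rw [this, mem_nearZeroBox, mem_nearZeroBox, sqrtForm_comp_equiv]
  exact and_congr_left' (e.forall_congr_right (q := fun j => n j ∈ dyadicBlock (N j))).symm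

lemma sqrtForm_eq_add_tail (s : Fin (k + 1) → ℝ) (n : Fin (k + 1) → ℕ) :
    sqrtForm s n = s 0 * √(n 0) + sqrtForm (Fin.tail s) (Fin.tail n) :=
  Fin.sum_univ_succ _

lemma card_le_of_tail_eq {s : Fin (k + 1) → ℝ} {v : Fin k → ℕ} {N : ℕ}
    {S : Finset (Fin (k + 1) → ℕ)} (hs : |s 0| = 1) (hΔ : 0 ≤ Δ)
    (hS : ∀ n ∈ S, n 0 ∈ dyadicBlock N ∧ Fin.tail n = v ∧ |sqrtForm s n| ≤ Δ) :
    (#S : ℝ) ≤ 6 * Δ * √N + 1 := by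
  rcases S.eq_empty_or_nonempty with rfl | ⟨m, hm⟩
  · rw [card_empty, Nat.cast_zero]
    positivity
  have hN0 : (0 : ℝ) < N := by exact_mod_cast pos_of_mem_dyadicBlock (hS m hm).1
  have hmem : ∀ n ∈ S, s 0 * √(n 0 : ℝ) ∈ Set.Icc (-sqrtForm (Fin.tail s) v - Δ)
      (-sqrtForm (Fin.tail s) v - Δ + 2 * Δ) := fun n hn => by
    obtain ⟨-, rfl, h⟩ := hS n hn
    rw [sqrtForm_eq_add_tail, abs_le] at h
    constructor <;> linarith
  have hsep : (S : Set (Fin (k + 1) → ℕ)).Pairwise fun n n' =>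
      1 / (3 * √(N : ℝ)) ≤ |s 0 * √(n 0 : ℝ) - s 0 * √(n' 0 : ℝ)| := fun n hn n' hn' hne => by
    obtain ⟨h0, htail, -⟩ := hS n hn
    obtain ⟨h0', htail', -⟩ := hS n' hn'
    rw [← mul_sub, abs_mul, hs, one_mul]
    refine inv_le_abs_sqrt_sub_sqrt h0 h0' fun h => hne ?_
    rw [← Fin.cons_self_tail n, ← Fin.cons_self_tail n', h, htail, htail']
  refine (card_le_of_pairwise_le_abs_sub (by positivity) (by positivity) hmem hsep).trans_eq ?_
  field_simp
  ring

lemma card_nearZeroBox_le_mul_prod {s : Fin (k + 1) → ℝ} {N : Fin (k + 1) → ℕ} (hs : |s 0| = 1)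
    (hΔ : 0 ≤ Δ) :
    (#(nearZeroBox s N Δ) : ℝ) ≤ (6 * Δ * √(N 0) + 1) * ∏ j, (Fin.tail N j : ℝ) := by
  have hmaps : ∀ n ∈ nearZeroBox s N Δ,
      Fin.tail n ∈ Fintype.piFinset fun j => dyadicBlock (Fin.tail N j) := fun n hn =>
    Fintype.mem_piFinset.mpr fun j => (mem_nearZeroBox.mp hn).1 j.succ
  refine (card_le_mul_card_of_fiber_le hmaps (B := 6 * Δ * √(N 0) + 1) fun v _ => ?_).trans_eq ?_
  · refine card_le_of_tail_eq hs hΔ (v := v) fun n hn => ?_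
    obtain ⟨hn, htail⟩ := mem_filter.mp hn
    obtain ⟨hN, -, h⟩ := mem_nearZeroBox.mp hn
    exact ⟨hN 0, htail, h⟩
  · simp only [Fintype.card_piFinset, card_dyadicBlock, Nat.cast_prod]

lemma sqrt_zero_le_of_abs_sqrtForm_le {s : Fin (k + 1) → ℝ} {n : Fin (k + 1) → ℕ}
    (hs : ∀ j, |s j| = 1) (h : |sqrtForm s n| ≤ Δ) :
    √(n 0 : ℝ) ≤ Δ + ∑ j, √(Fin.tail n j : ℝ) := by
  have htail : |sqrtForm (Fin.tail s) (Fin.tail n)| ≤ ∑ j, √(Fin.tail n j : ℝ) := by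
    refine (abs_sum_le_sum_abs _ _).trans_eq (sum_congr rfl fun j _ => ?_)
    rw [abs_mul, Fin.tail, hs, one_mul, abs_of_nonneg (Real.sqrt_nonneg _)]
  calc √(n 0 : ℝ) = |s 0 * √(n 0)| := by rw [abs_mul, hs, one_mul, abs_of_nonneg (by positivity)]
    _ = |sqrtForm s n - sqrtForm (Fin.tail s) (Fin.tail n)| := by
        rw [sqrtForm_eq_add_tail, add_sub_cancel_right]
    _ ≤ Δ + ∑ j, √(Fin.tail n j : ℝ) := (abs_sub _ _).trans (add_le_add h htail)

lemma le_mul_of_nonempty_nearZeroBox {s : Fin 4 → ℝ} {N : Fin 4 → ℕ} (hs : ∀ j, |s j| = 1)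
    (hN : Antitone N) (hΔN : 8 * Δ * √(N 0) < 1) (hne : (nearZeroBox s N Δ).Nonempty) :
    (N 0 : ℝ) ≤ 25 * N 1 := by
  obtain ⟨n, hn⟩ := hne
  obtain ⟨hmem, -, h⟩ := mem_nearZeroBox.mp hn
  have hsqrt (j : Fin 4) (hj : 1 ≤ j) : √(n j : ℝ) ≤ 3 / 2 * √(N 1) :=
    (sqrt_le_of_mem_dyadicBlock (hmem j)).trans
      (by gcongr; exact hN hj)
  have h1 : 1 ≤ √(N 1 : ℝ) :=
    Real.one_le_sqrt.mpr (by exact_mod_cast pos_of_mem_dyadicBlock (hmem 1))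
  have h0 : √(N 1 : ℝ) ≤ √(N 0) := Real.sqrt_le_sqrt (by exact_mod_cast hN (Fin.zero_le 1))
  have hΔ : Δ ≤ 1 / 8 := by nlinarith [abs_nonneg (sqrtForm s n)]
  have hsum := sqrt_zero_le_of_abs_sqrtForm_le hs h
  simp only [Fin.sum_univ_three, Fin.tail, Fin.succ_zero_eq_one, Fin.succ_one_eq_two] at hsum
  have h5 : √(N 0 : ℝ) ≤ 5 * √(N 1) := by
    have := sqrt_le_sqrt_of_mem_dyadicBlock (hmem 0)
    have := hsqrt 1 le_rfl
    have := hsqrt 2 (by decide)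
    have := hsqrt (Fin.succ 2) (by decide)
    linarith
  rw [Real.sqrt_le_left (by positivity), mul_pow, Real.sq_sqrt (Nat.cast_nonneg _)] at h5
  linarith

lemma floor_sub_floor_mem_of_abs_sub_le_one {u v : ℝ} (h : |u - v| ≤ 1) :
    ⌊u⌋ - ⌊v⌋ ∈ ({-1, 0, 1} : Finset ℤ) := by
  rw [abs_le] at h
  have h1 : ⌊u⌋ < ⌊v⌋ + 2 := by
    have : (⌊u⌋ : ℝ) < ⌊v⌋ + 2 := by linarith [Int.floor_le u, Int.lt_floor_add_one v]
    exact_mod_cast this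
  have h2 : ⌊v⌋ < ⌊u⌋ + 2 := by
    have : (⌊v⌋ : ℝ) < ⌊u⌋ + 2 := by linarith [Int.floor_le v, Int.lt_floor_add_one u]
    exact_mod_cast this
  simp only [mem_insert, mem_singleton]
  omega

lemma card_nearZeroBox_le_sum_card_sqrtCell {s : Fin 4 → ℝ} {N : Fin 4 → ℕ} (hΔ : 0 < Δ) :
    #(nearZeroBox s N Δ) ≤ ∑ d ∈ ({-1, 0, 1} : Finset ℤ),
      #{z ∈ (dyadicBlock (N 0) ×ˢ dyadicBlock (N 2)) ×ˢ (dyadicBlock (N 1) ×ˢ dyadicBlock (N 3)) |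
        sqrtCell Δ (s 0) (s 2) z.1 = sqrtCell Δ (-s 1) (-s 3) z.2 + d} := by
  refine le_trans ?_ card_biUnion_le
  refine card_le_card_of_injOn (fun n => ((n 0, n 2), (n 1, n 3))) (fun n hn => ?_) ?_
  · obtain ⟨hmem, -, h⟩ := mem_nearZeroBox.mp hn
    simp only [coe_biUnion, Set.mem_iUnion, mem_coe, mem_filter, mem_product, exists_prop]
    refine ⟨_, floor_sub_floor_mem_of_abs_sub_le_one ?_, ⟨⟨hmem 0, hmem 2⟩, hmem 1, hmem 3⟩,
      (add_sub_cancel _ _).symm⟩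
    rw [← sub_div, abs_div, abs_of_pos hΔ, div_le_one hΔ]
    refine (congrArg abs ?_).trans_le h
    simp only [sqrtForm, Fin.sum_univ_four]
    ring
  · intro n _ n' _ h
    simp only [Prod.mk.injEq] at h
    ext j
    fin_cases j <;> simp [h]

lemma card_nearZeroBox_sq_le {s : Fin 4 → ℝ} {N : Fin 4 → ℕ} (hs : ∀ j, |s j| = 1)
    (hpos : ∀ j, 0 < N j) (hN : Antitone N) (hΔ : 0 < Δ) (hΔN : 8 * Δ * √(N 0) < 1) :
    (#(nearZeroBox s N Δ) : ℝ) ^ 2 ≤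
      9 * ((20 * (N 0 * (N 2 * √(N 2))) + 675 * Δ * (N 2) ^ 2 * (N 0 * √(N 0))) *
        (20 * (N 1 * (N 3 * √(N 3))) + 675 * Δ * (N 3) ^ 2 * (N 1 * √(N 1)))) := by
  set E := (20 * (N 0 * (N 2 * √(N 2))) + 675 * Δ * (N 2) ^ 2 * (N 0 * √(N 0))) *
        (20 * (N 1 * (N 3 * √(N 3))) + 675 * Δ * (N 3) ^ 2 * (N 1 * √(N 1))) with hE
  have hΔN' : 8 * Δ * √(N 1) < 1 := by
    refine lt_of_le_of_lt ?_ hΔN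
    gcongr
    exact hN (Fin.zero_le 1)
  have hshift (d : ℤ) : (#{z ∈ (dyadicBlock (N 0) ×ˢ dyadicBlock (N 2)) ×ˢ
      (dyadicBlock (N 1) ×ˢ dyadicBlock (N 3)) |
        sqrtCell Δ (s 0) (s 2) z.1 = sqrtCell Δ (-s 1) (-s 3) z.2 + d} : ℝ) ≤ √E := by
    have hCS := card_filter_prod_eq_sq_le (dyadicBlock (N 0) ×ˢ dyadicBlock (N 2))
      (dyadicBlock (N 1) ×ˢ dyadicBlock (N 3)) (sqrtCell Δ (s 0) (s 2))
      fun y => sqrtCell Δ (-s 1) (-s 3) y + d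
    simp only [add_left_inj] at hCS
    have hE0 := card_sqrtCell_eq_le (hpos 2) (hN (Fin.zero_le 2)) hΔ hΔN (hs 0) (hs 2)
    have hE1 := card_sqrtCell_eq_le (a := -s 1) (b := -s 3) (hpos 3)
      (hN (by decide : (1 : Fin 4) ≤ 3)) hΔ hΔN' (by rw [abs_neg, hs]) (by rw [abs_neg, hs])
    refine Real.le_sqrt_of_sq_le ((?_ : _ ≤ _).trans
      (mul_le_mul hE0 hE1 (Nat.cast_nonneg _) (by positivity)))
    exact_mod_cast hCS
  have hcard : (#(nearZeroBox s N Δ) : ℝ) ≤ 3 * √E := by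
    refine (Nat.cast_le.mpr (card_nearZeroBox_le_sum_card_sqrtCell hΔ)).trans ?_
    rw [Nat.cast_sum]
    refine (sum_le_card_nsmul _ _ _ fun d _ => hshift d).trans_eq ?_
    rw [nsmul_eq_mul]
    rfl
  calc _ ≤ (3 * √E) ^ 2 := by gcongr
    _ = 9 * E := by
        rw [mul_pow, Real.sq_sqrt (by positivity)]
        norm_num

end NearZeroBox

section ConjugateForm

lemma inv_le_abs_add_of_sq_eq {x y R : ℝ} {p q : ℕ} (hx : x ^ 2 = p) (hy : y ^ 2 = q) (hp : 0 < p)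
    (hxR : |x| ≤ R) (hyR : |y| ≤ R) (h : x + y ≠ 0) : 1 / (2 * R) ≤ |x + y| := by
  have hx1 : 1 ≤ |x| := by
    rw [← one_le_sq_iff_one_le_abs, hx]
    exact_mod_cast hp
  have hR : 0 < 2 * R := by linarith
  rw [div_le_iff₀ hR]
  rcases eq_or_ne p q with rfl | hpq
  · rw [← hy] at hx
    obtain rfl := (sq_eq_sq_iff_eq_or_eq_neg.mp hx).resolve_right fun hneg => h (by linarith)
    rw [← two_mul, abs_mul, abs_two]
    nlinarith
  · have hint : (1 : ℝ) ≤ |(p : ℝ) - q| := by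
      have : (1 : ℤ) ≤ |(p : ℤ) - q| := Int.one_le_abs (by omega)
      exact_mod_cast this
    calc (1 : ℝ) ≤ |(p : ℝ) - q| := hint
      _ = |x + y| * |x - y| := by rw [← hx, ← hy, sq_sub_sq, abs_mul]
      _ ≤ |x + y| * (2 * R) := by
          gcongr
          linarith [abs_sub x y]

/-- Writing `η = m + 2 * P - 2 * Q`, the expression factors as
`η * (4 * P - η) * (2 * P - m - 2 * Q) * (2 * P + m + 2 * Q)`. -/
lemma sq_sub_ne_zero_of_abs_lt_one {P Q : ℝ} (m : ℤ) (hP : 1 ≤ |P|) (hQ : 1 ≤ |Q|)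
    (h0 : m + 2 * P - 2 * Q ≠ 0) (h1 : |m + 2 * P - 2 * Q| < 1) :
    (4 * P ^ 2 - 4 * Q ^ 2 - (m : ℝ) ^ 2) ^ 2 - 16 * (m : ℝ) ^ 2 * Q ^ 2 ≠ 0 := by
  have hfactor : (4 * P ^ 2 - 4 * Q ^ 2 - (m : ℝ) ^ 2) ^ 2 - 16 * (m : ℝ) ^ 2 * Q ^ 2 =
      (m + 2 * P - 2 * Q) * (2 * P - m + 2 * Q) * (2 * P - m - 2 * Q) * (2 * P + m + 2 * Q) := by
    ring
  rw [hfactor]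
  have habs (c : ℝ) (hc : 1 ≤ |c|) : m + 2 * P - 2 * Q ≠ 4 * c ∧ m + 2 * P - 2 * Q ≠ -(4 * c) := by
    constructor <;> intro h <;> rw [h] at h1 <;> simp only [abs_neg, abs_mul] at h1 <;>
      norm_num at h1 <;> linarith
  refine mul_ne_zero (mul_ne_zero (mul_ne_zero h0 fun h => ?_) fun h => ?_) fun h => ?_
  · exact (habs P hP).1 (by linarith)
  · have hm : m + 2 * P - 2 * Q = ((2 * m : ℤ) : ℝ) := by
      push_cast
      linarith
    rw [hm] at h0 h1
    have : |2 * m| < 1 := by exact_mod_cast h1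
    exact h0 (by rw [Int.abs_lt_one_iff.mp this, Int.cast_zero])
  · exact (habs Q hQ).2 (by linarith)

/-- The integer part `m` of the product `m + 2 * √(n₀ n₁) - 2 * √(n₂ n₃)` of the conjugate forms
`√n₀ + √n₁ ± (√n₂ + √n₃)`. -/
def pellM (n : Fin 4 → ℕ) : ℤ := n 0 + n 1 - n 2 - n 3

/-- The integer `k = 4 n₀ n₁ - 4 n₂ n₃ - m ^ 2`, where `m = pellM n`: if one of the forms
`√n₀ + √n₁ ± (√n₂ + √n₃)` is small, then `k` is close to `± 4 * m * √(n₂ n₃)`. -/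
def pellK (n : Fin 4 → ℕ) : ℤ := 4 * (n 0 * n 1) - 4 * (n 2 * n 3) - pellM n ^ 2

variable {x : Fin 4 → ℝ} {n : Fin 4 → ℕ}

lemma mul_conj_eq (hx : ∀ j, x j ^ 2 = n j) :
    (x 0 + x 1 + x 2 + x 3) * (x 0 + x 1 - x 2 - x 3) =
      pellM n + 2 * (x 0 * x 1) - 2 * (x 2 * x 3) := by
  simp only [pellM]
  push_cast
  linear_combination hx 0 + hx 1 - hx 2 - hx 3

lemma pellK_eq (hx : ∀ j, x j ^ 2 = n j) :
    (pellK n : ℝ) = 4 * (x 0 * x 1) ^ 2 - 4 * (x 2 * x 3) ^ 2 - (pellM n : ℝ) ^ 2 := by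
  simp only [pellK, mul_pow, hx]
  push_cast
  ring

lemma conj_ne_zero (hx : ∀ j, x j ^ 2 = n j) {R : ℝ} (hR : ∀ j, |x j| ≤ R) (hn : ∀ j, 0 < n j)
    (h0 : x 0 + x 1 + x 2 + x 3 ≠ 0) (h1 : |x 0 + x 1 + x 2 + x 3| < 1 / R) :
    x 0 + x 1 - x 2 - x 3 ≠ 0 := fun h => by
  have hα : x 0 + x 1 + x 2 + x 3 = 2 * (x 0 + x 1) := by linarith
  rw [hα] at h0 h1
  have hle := inv_le_abs_add_of_sq_eq (hx 0) (hx 1) (hn 0) (hR 0) (hR 1) (right_ne_zero_of_mul h0)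
  rw [abs_mul, abs_two] at h1
  have hhalf : 1 / R = 2 * (1 / (2 * R)) := by ring
  linarith

lemma one_le_abs_mul (hx : ∀ j, x j ^ 2 = n j) (hn : ∀ j, 0 < n j) (i j : Fin 4) :
    1 ≤ |x i * x j| := by
  rw [← one_le_sq_iff_one_le_abs, mul_pow, hx, hx]
  exact_mod_cast Nat.mul_pos (hn i) (hn j)

lemma abs_mul_conj_le {R Δ : ℝ} (hR : ∀ j, |x j| ≤ R) (h1 : |x 0 + x 1 + x 2 + x 3| ≤ Δ) :
    |(x 0 + x 1 + x 2 + x 3) * (x 0 + x 1 - x 2 - x 3)| ≤ 4 * Δ * R := by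
  have hconj : |x 0 + x 1 - x 2 - x 3| ≤ 4 * R := by
    have hR' (j : Fin 4) := abs_le.mp (hR j)
    rw [abs_le]
    constructor <;> linarith [hR' 0, hR' 1, hR' 2, hR' 3]
  rw [abs_mul]
  calc _ ≤ Δ * (4 * R) := mul_le_mul h1 hconj (abs_nonneg _) ((abs_nonneg _).trans h1)
    _ = 4 * Δ * R := by ring

lemma abs_pellK_add_le (hx : ∀ j, x j ^ 2 = n j) {R Δ : ℝ} (hR : ∀ j, |x j| ≤ R) (hR1 : 1 ≤ R)
    (hΔR : 4 * Δ * R < 1) (h1 : |x 0 + x 1 + x 2 + x 3| ≤ Δ) :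
    |(pellK n : ℝ) + 4 * pellM n * (x 2 * x 3)| ≤ 20 * Δ * R ^ 3 := by
  have hη := abs_mul_conj_le hR h1
  rw [mul_conj_eq hx] at hη
  have hP : |4 * (x 0 * x 1)| ≤ 4 * R ^ 2 := by
    rw [abs_mul, abs_mul, sq, abs_of_pos (four_pos (α := ℝ))]
    gcongr <;> exact hR _
  have hfactor : (pellK n : ℝ) + 4 * pellM n * (x 2 * x 3) =
      (pellM n + 2 * (x 0 * x 1) - 2 * (x 2 * x 3)) *
        (4 * (x 0 * x 1) - (pellM n + 2 * (x 0 * x 1) - 2 * (x 2 * x 3))) := by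
    rw [pellK_eq hx]
    ring
  rw [hfactor, abs_mul]
  calc _ ≤ 4 * Δ * R * (5 * R ^ 2) := by
        refine mul_le_mul hη ((abs_sub _ _).trans ?_) (abs_nonneg _) ((abs_nonneg _).trans hη)
        nlinarith
    _ = 20 * Δ * R ^ 3 := by ring

lemma isNearPell_natAbs (hx : ∀ j, x j ^ 2 = n j) {R Δ : ℝ} {B : ℕ} (hR : ∀ j, |x j| ≤ R)
    (hn : ∀ j, 0 < n j) (hR1 : 1 ≤ R) (hΔR : 4 * Δ * R < 1) (h0 : x 0 + x 1 + x 2 + x 3 ≠ 0)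
    (h1 : |x 0 + x 1 + x 2 + x 3| ≤ Δ) (hB : B ≤ n 2 * n 3) (hB' : n 2 * n 3 < 4 * B) :
    IsNearPell B (20 * Δ * R ^ 3) (pellM n).natAbs (pellK n).natAbs (n 2 * n 3) where
  le_b := hB
  b_lt := hB'
  abs_sub_le := by
    have hQ : √((n 2 * n 3 : ℕ) : ℝ) = |x 2 * x 3| := by
      rw [Nat.cast_mul, ← hx, ← hx, ← mul_pow, Real.sqrt_sq_eq_abs]
    have hQ' : 4 * ((pellM n).natAbs : ℝ) * |x 2 * x 3| = |-(4 * pellM n * (x 2 * x 3))| := by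
      rw [abs_neg, abs_mul (4 * _), abs_mul 4, abs_of_pos (four_pos (α := ℝ)), Nat.cast_natAbs,
        Int.cast_abs]
    rw [hQ, hQ', Nat.cast_natAbs, Int.cast_abs]
    refine (abs_abs_sub_abs_le _ _).trans ?_
    rw [sub_neg_eq_add]
    exact abs_pellK_add_le hx hR hR1 hΔR h1
  sq_sub_ne_zero := by
    have hlt : |x 0 + x 1 + x 2 + x 3| < 1 / R := by
      rw [lt_div_iff₀ (by linarith)]
      nlinarith [abs_nonneg (x 0 + x 1 + x 2 + x 3)]
    have hη0 := mul_ne_zero h0 (conj_ne_zero hx hR hn h0 hlt)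
    have hη1 := (abs_mul_conj_le hR h1).trans_lt hΔR
    rw [mul_conj_eq hx] at hη0 hη1
    have key := sq_sub_ne_zero_of_abs_lt_one (pellM n) (one_le_abs_mul hx hn 0 1)
      (one_le_abs_mul hx hn 2 3) hη0 hη1
    rw [← pellK_eq hx, mul_pow (x 2), hx, hx] at key
    rw [Int.natAbs_sq, Int.natAbs_sq]
    exact_mod_cast key

end ConjugateForm

section NearPellBox

variable {s : Fin 4 → ℝ} {N n : Fin 4 → ℕ} {Δ : ℝ}

lemma card_le_card_divisors_mul {S : Finset (Fin 4 → ℕ)} {p q : ℕ} (hp : p ≠ 0) (hq : q ≠ 0)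
    (hS : ∀ n ∈ S, n 0 * n 1 = p ∧ n 2 * n 3 = q) : #S ≤ #p.divisors * #q.divisors := by
  rw [← card_product]
  refine card_le_card_of_injOn (fun n => (n 0, n 2)) (fun n hn => ?_) fun n hn n' hn' h => ?_
  · obtain ⟨h01, h23⟩ := hS n hn
    simp only [coe_product, Set.mem_prod, mem_coe, Nat.mem_divisors]
    exact ⟨⟨⟨_, h01.symm⟩, hp⟩, ⟨_, h23.symm⟩, hq⟩
  · obtain ⟨h01, h23⟩ := hS n hn
    obtain ⟨h01', h23'⟩ := hS n' hn'
    obtain ⟨h0, h2⟩ := Prod.mk.inj h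
    have h1 : n 1 = n' 1 := by
      refine Nat.eq_of_mul_eq_mul_left (Nat.pos_of_ne_zero fun hz => hp ?_) (?_ : n 0 * _ = _)
      · rw [← h01, hz, zero_mul]
      · rw [h01, h0, h01']
    have h3 : n 3 = n' 3 := by
      refine Nat.eq_of_mul_eq_mul_left (Nat.pos_of_ne_zero fun hz => hq ?_) (?_ : n 2 * _ = _)
      · rw [← h23, hz, zero_mul]
      · rw [h23, h2, h23']
    ext j
    fin_cases j <;> assumption

lemma card_le_two_mul_sq_of_pell_eq {S : Finset (Fin 4 → ℕ)} {m k b : ℕ} {D : ℝ} {X : ℕ}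
    (hD : ∀ p < X ^ 2, (#p.divisors : ℝ) ≤ D) (hn : ∀ n ∈ S, ∀ j, 0 < n j ∧ n j < X)
    (hS : ∀ n ∈ S, (pellM n).natAbs = m ∧ (pellK n).natAbs = k ∧ n 2 * n 3 = b) :
    (#S : ℝ) ≤ 2 * D ^ 2 := by
  have hmaps : ∀ n ∈ S, pellK n ∈ ({(k : ℤ), -(k : ℤ)} : Finset ℤ) := fun n hn => by
    have := (hS n hn).2.1
    simp only [mem_insert, mem_singleton]
    omega
  have hcard : (#({(k : ℤ), -(k : ℤ)} : Finset ℤ) : ℝ) ≤ 2 := by exact_mod_cast card_le_two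
  have hlt {a b : ℕ} (ha : a < X) (hb : b < X) : a * b < X ^ 2 := by nlinarith
  refine (card_le_mul_card_of_fiber_le hmaps (B := D ^ 2) fun z _ => ?_).trans
    (by nlinarith [sq_nonneg D])
  rcases ({n ∈ S | pellK n = z} : Finset _).eq_empty_or_nonempty with hF | ⟨n', hn'⟩
  · rw [hF, card_empty, Nat.cast_zero]
    positivity
  obtain ⟨hn'S, hK'⟩ := mem_filter.mp hn'
  have h' := hn n' hn'S
  have hprod : ∀ n ∈ ({n ∈ S | pellK n = z} : Finset _),
      n 0 * n 1 = n' 0 * n' 1 ∧ n 2 * n 3 = n' 2 * n' 3 := fun n hnF => by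
    obtain ⟨hnS, hK⟩ := mem_filter.mp hnF
    have hb : n 2 * n 3 = n' 2 * n' 3 := (hS n hnS).2.2.trans (hS n' hn'S).2.2.symm
    have hm : pellM n ^ 2 = pellM n' ^ 2 :=
      Int.natAbs_eq_iff_sq_eq.mp ((hS n hnS).1.trans (hS n' hn'S).1.symm)
    have hKK : pellK n = pellK n' := hK.trans hK'.symm
    rw [pellK, pellK, hm] at hKK
    refine ⟨?_, hb⟩
    zify at hb ⊢
    linarith
  calc _ ≤ ((#(n' 0 * n' 1).divisors * #(n' 2 * n' 3).divisors : ℕ) : ℝ) :=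
        Nat.cast_le.mpr (card_le_card_divisors_mul (Nat.mul_pos (h' 0).1 (h' 1).1).ne'
          (Nat.mul_pos (h' 2).1 (h' 3).1).ne' hprod)
    _ ≤ D * D := by
        rw [Nat.cast_mul]
        have h01 := hD _ (hlt (h' 0).2 (h' 1).2)
        exact mul_le_mul h01 (hD _ (hlt (h' 2).2 (h' 3).2)) (Nat.cast_nonneg _)
          ((Nat.cast_nonneg _).trans h01)
    _ = D ^ 2 := (sq D).symm

lemma isNearPell_of_mem_nearZeroBox (hs : ∀ j, |s j| = 1) (hN : Antitone N)
    (hΔN : 8 * Δ * √(N 0) < 1) (hn : n ∈ nearZeroBox s N Δ) :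
    IsNearPell (N 2 * N 3) (68 * (Δ * (N 0 * √(N 0)))) (pellM n).natAbs (pellK n).natAbs
      (n 2 * n 3) := by
  obtain ⟨hmem, h0, h1⟩ := mem_nearZeroBox.mp hn
  have hpos (j : Fin 4) : 0 < n j := (pos_of_mem_dyadicBlock (hmem j)).trans_le
    (mem_Ico.mp (hmem j)).1
  have hR (j : Fin 4) : |s j * √(n j : ℝ)| ≤ 3 / 2 * √(N 0) := by
    rw [abs_mul, hs, one_mul, abs_of_nonneg (Real.sqrt_nonneg _)]
    refine (sqrt_le_of_mem_dyadicBlock (hmem j)).trans ?_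
    gcongr
    exact hN (Fin.zero_le j)
  have hsq (j : Fin 4) : (s j * √(n j : ℝ)) ^ 2 = n j := by
    rw [mul_pow, Real.sq_sqrt (Nat.cast_nonneg _), ← sq_abs, hs, one_pow, one_mul]
  have hN1 : 1 ≤ √(N 0 : ℝ) :=
    Real.one_le_sqrt.mpr (by exact_mod_cast pos_of_mem_dyadicBlock (hmem 0))
  obtain ⟨h2, h2'⟩ := mem_Ico.mp (hmem 2)
  obtain ⟨h3, h3'⟩ := mem_Ico.mp (hmem 3)
  rw [sqrtForm, Fin.sum_univ_four] at h0 h1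
  have hΔ : 0 ≤ Δ := (abs_nonneg _).trans h1
  have hpell := isNearPell_natAbs hsq hR hpos (by linarith) (by linarith) h0 h1
    (Nat.mul_le_mul h2 h3) (by nlinarith)
  refine { hpell with abs_sub_le := hpell.abs_sub_le.trans ?_ }
  have hcube : (3 / 2 * √(N 0 : ℝ)) ^ 3 = 27 / 8 * (N 0 * √(N 0)) := by
    nth_rewrite 2 [← Real.sq_sqrt (Nat.cast_nonneg (N 0))]
    ring
  rw [hcube]
  nlinarith [mul_nonneg hΔ (by positivity : (0 : ℝ) ≤ N 0 * √(N 0))]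

lemma natAbs_pellM_le {X : ℕ} (hn : ∀ j, n j < X) : (pellM n).natAbs ≤ 2 * X := by
  have h0 := hn 0
  have h1 := hn 1
  have h2 := hn 2
  have h3 := hn 3
  rw [pellM]
  omega

lemma pos_and_lt_of_mem_nearZeroBox (hpos : ∀ j, 0 < N j) (hN : Antitone N)
    (hn : n ∈ nearZeroBox s N Δ) (j : Fin 4) : 0 < n j ∧ n j < 2 * N 0 := by
  have hmem := mem_Ico.mp ((mem_nearZeroBox.mp hn).1 j)
  exact ⟨(hpos j).trans_le hmem.1, hmem.2.trans_le (Nat.mul_le_mul_left 2 (hN (Fin.zero_le j)))⟩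

lemma card_nearZeroBox_le_of_card_divisors_le (hs : ∀ j, |s j| = 1) (hpos : ∀ j, 0 < N j)
    (hN : Antitone N) (hΔ : 0 ≤ Δ) (hΔN : 8 * Δ * √(N 0) < 1) {D : ℝ}
    (hD : ∀ p < (8 * N 0) ^ 2, (#p.divisors : ℝ) ≤ D) :
    (#(nearZeroBox s N Δ) : ℝ) ≤ 3000000 * D ^ 3 * (1 + log (8 * N 0)) *
      (Δ * (N 0 * √(N 0)) * N 0 * (N 2 * N 3) +
        √(Δ * (N 0 * √(N 0))) * N 0 * (N 2 * N 3 : ℝ) ^ ((3 : ℝ) / 4)) := by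
  have hX (n) (hn : n ∈ nearZeroBox s N Δ) := pos_and_lt_of_mem_nearZeroBox hpos hN hn
  have hN0 := hpos 0
  have hD1 : 1 ≤ D := by simpa using hD 1 (by nlinarith)
  set f : (Fin 4 → ℕ) → ℕ × ℕ × ℕ := fun n => ((pellM n).natAbs, (pellK n).natAbs, n 2 * n 3)
  have hfib : (#(nearZeroBox s N Δ) : ℝ) ≤ 2 * D ^ 2 * #((nearZeroBox s N Δ).image f) := by
    refine card_le_mul_card_of_fiber_le (fun n hn => mem_image_of_mem f hn) fun y _ => ?_
    refine card_le_two_mul_sq_of_pell_eq (X := 2 * N 0) (m := y.1) (k := y.2.1) (b := y.2.2)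
      (fun p hp => hD p (by nlinarith)) (fun n hn => hX n (mem_filter.mp hn).1) fun n hn => ?_
    rw [← (mem_filter.mp hn).2]
    exact ⟨rfl, rfl, rfl⟩
  have hcard : (#((nearZeroBox s N Δ).image f) : ℝ) ≤ D * (1 + log (2 * (4 * N 0 : ℕ))) * _ :=
    IsNearPell.card_le (Nat.mul_pos (hpos 2) (hpos 3)) (by positivity : 0 < 4 * N 0)
      (by positivity : 0 ≤ 68 * (Δ * (N 0 * √(N 0)))) hD1
      (fun m hm => hD _ (Nat.pow_lt_pow_left (by omega) two_ne_zero))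
      (forall_mem_image.mpr fun n hn => isNearPell_of_mem_nearZeroBox hs hN hΔN hn)
      (forall_mem_image.mpr fun n hn =>
        (natAbs_pellM_le fun j => (hX n hn j).2).trans_eq (by ring))
  have hlog : (2 * (4 * N 0 : ℕ) : ℝ) = 8 * N 0 := by
    push_cast
    ring
  rw [hlog] at hcard
  push_cast at hcard
  have hsqrt : √(68 * (Δ * (N 0 * √(N 0)))) ≤ 9 * √(Δ * (N 0 * √(N 0))) := by
    rw [Real.sqrt_mul (by norm_num)]
    gcongr
    exact Real.sqrt_le_iff.mpr (by norm_num)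
  refine hfib.trans ((mul_le_mul_of_nonneg_left hcard (by positivity)).trans ?_)
  generalize hθ : Δ * (N 0 * √(N 0)) = θ at *
  have hθ0 : 0 ≤ θ := by
    rw [← hθ]
    positivity
  have hlog0 : 0 ≤ log (8 * N 0) := by exact_mod_cast Real.log_natCast_nonneg (8 * N 0)
  have ha : 0 ≤ θ * N 0 * (N 2 * N 3) := by positivity
  have hb : 0 ≤ √θ * N 0 * (N 2 * N 3 : ℝ) ^ ((3 : ℝ) / 4) := by positivity
  calc _ ≤ 2 * D ^ 2 * (D * (1 + log (8 * N 0)) * (5232 * (68 * θ) * (4 * N 0) * (N 2 * N 3) +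
          42 * (9 * √θ) * (4 * N 0) * (N 2 * N 3 : ℝ) ^ ((3 : ℝ) / 4))) := by gcongr
    _ ≤ 2 * D ^ 2 * (D * (1 + log (8 * N 0)) * (1500000 * (θ * N 0 * (N 2 * N 3) +
          √θ * N 0 * (N 2 * N 3 : ℝ) ^ ((3 : ℝ) / 4)))) := by
        gcongr
        linarith
    _ = _ := by ring

end NearPellBox

section BoxCount

-- In the lemmas about `q` and `t` we have `N j = q j ^ 4`, and `t` stands for `T ^ (1 / 8)`; this
-- makes all the exponents that occur integers.
variable {s : Fin 4 → ℝ} {N : Fin 4 → ℕ} {q : Fin 4 → ℝ} {Δ t : ℝ}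

lemma sqrt_eq_sq_of_eq_pow_four {x r : ℝ} (h : x = r ^ 4) : √x = r ^ 2 := by
  rw [h, show r ^ 4 = (r ^ 2) ^ 2 by ring, Real.sqrt_sq (sq_nonneg r)]

lemma rpow_three_div_four_eq_pow {x r : ℝ} (hr : 0 ≤ r) (h : x = r ^ 4) :
    x ^ ((3 : ℝ) / 4) = r ^ 3 := by
  rw [h, ← Real.rpow_natCast, ← Real.rpow_natCast, ← Real.rpow_mul hr]
  norm_num

lemma antitone_of_eq_pow_four (hq : ∀ j, (N j : ℝ) = q j ^ 4) (hq1 : ∀ j, 1 ≤ q j)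
    (hqa : Antitone q) : Antitone N := fun i j hij => by
  have : (N j : ℝ) ≤ N i := by
    rw [hq, hq]
    exact pow_le_pow_left₀ (zero_le_one.trans (hq1 j)) (hqa hij) 4
  exact_mod_cast this

lemma pos_of_eq_pow_four (hq : ∀ j, (N j : ℝ) = q j ^ 4) (hq1 : ∀ j, 1 ≤ q j) (j : Fin 4) :
    0 < N j := by
  have : (0 : ℝ) < N j := by
    rw [hq]
    exact pow_pos (zero_lt_one.trans_le (hq1 j)) 4
  exact_mod_cast this

lemma card_nearZeroBox_le_of_one_le (hs : |s 0| = 1) (hq : ∀ j, (N j : ℝ) = q j ^ 4)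
    (hq1 : ∀ j, 1 ≤ q j) (hqa : Antitone q) (hqt : q 0 ^ 2 ≤ t ^ 3) (hΔ : 0 ≤ Δ)
    (hΔN : 1 ≤ 8 * Δ * √(N 0)) :
    (#(nearZeroBox s N Δ) : ℝ) ≤ 14 * (t ^ 3 * Δ * ∏ j, q j ^ 3) := by
  have hq0 (j : Fin 4) : 0 ≤ q j := zero_le_one.trans (hq1 j)
  have htail : ∏ j, (Fin.tail N j : ℝ) = q 1 ^ 4 * q 2 ^ 4 * q 3 ^ 4 := by
    rw [Fin.prod_univ_three, ← hq, ← hq, ← hq]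
    rfl
  have hle : q 1 * (q 2 * q 3) ≤ q 0 * t ^ 3 := by
    have h23 : q 2 * q 3 ≤ q 0 * q 0 :=
      mul_le_mul (hqa (Fin.zero_le 2)) (hqa (Fin.zero_le 3)) (hq0 3) (hq0 0)
    exact mul_le_mul (hqa (Fin.zero_le 1)) (h23.trans (by rwa [← sq]))
      (mul_nonneg (hq0 2) (hq0 3)) (hq0 0)
  have hX : 0 ≤ Δ * (q 0 ^ 2 * (q 1 ^ 3 * q 2 ^ 3 * q 3 ^ 3)) := by
    have := hq0 1
    have := hq0 2
    have := hq0 3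
    positivity
  calc (#(nearZeroBox s N Δ) : ℝ) ≤ (6 * Δ * √(N 0) + 1) * ∏ j, (Fin.tail N j : ℝ) :=
        card_nearZeroBox_le_mul_prod hs hΔ
    _ ≤ 14 * Δ * √(N 0) * ∏ j, (Fin.tail N j : ℝ) := by
        gcongr
        linarith
    _ = 14 * (Δ * (q 0 ^ 2 * (q 1 ^ 3 * q 2 ^ 3 * q 3 ^ 3)) * (q 1 * (q 2 * q 3))) := by
        rw [htail, sqrt_eq_sq_of_eq_pow_four (hq 0)]
        ring
    _ ≤ 14 * (Δ * (q 0 ^ 2 * (q 1 ^ 3 * q 2 ^ 3 * q 3 ^ 3)) * (q 0 * t ^ 3)) := by gcongr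
    _ = 14 * (t ^ 3 * Δ * ∏ j, q j ^ 3) := by
        rw [Fin.prod_univ_four]
        ring

lemma energy_mul_energy_le (hq1 : ∀ j, 1 ≤ q j) (hqa : Antitone q) (ht : 1 ≤ t)
    (hqt : q 0 ^ 2 ≤ t ^ 3) (hΔ : 0 < Δ) (hΔt : 1 ≤ Δ * t ^ 4) (h01 : q 0 ≤ 5 / 2 * q 1)
    (htq : t ^ 2 ≤ q 0 ^ 4) :
    (20 + 675 * (Δ * (q 0 ^ 2 * q 2 ^ 2))) * (20 + 675 * (Δ * (q 1 ^ 2 * q 3 ^ 2))) ≤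
      490000 * (t ^ 6 * Δ ^ 2 * (q 0 ^ 2 * q 1 ^ 2)) := by
  have hq0 (j : Fin 4) : 0 ≤ q j := zero_le_one.trans (hq1 j)
  have h21 : q 2 ≤ q 1 := hqa (by decide)
  have h30 : q 3 ≤ q 0 := hqa (by decide)
  have h23 : q 2 * q 3 ≤ t ^ 3 := by
    refine le_trans ?_ hqt
    rw [sq]
    exact mul_le_mul (hqa (by decide)) h30 (hq0 3) (hq0 0)
  set V := t ^ 6 * Δ ^ 2 * (q 0 ^ 2 * q 1 ^ 2)
  have hone : 1 ≤ 25 / 4 * V :=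
    calc (1 : ℝ) ≤ (Δ * t ^ 4) ^ 2 := one_le_pow₀ hΔt
      _ = t ^ 6 * Δ ^ 2 * t ^ 2 := by ring
      _ ≤ t ^ 6 * Δ ^ 2 * (q 0 ^ 2 * q 0 ^ 2) := by
          gcongr
          exact htq.trans_eq (by ring)
      _ ≤ t ^ 6 * Δ ^ 2 * (q 0 ^ 2 * (5 / 2 * q 1) ^ 2) := by
          have := hq0 0
          gcongr
      _ = 25 / 4 * V := by ring
  have hΔV : Δ * (q 0 ^ 2 * q 1 ^ 2) ≤ V :=
    calc Δ * (q 0 ^ 2 * q 1 ^ 2) = Δ * (q 0 ^ 2 * q 1 ^ 2) * 1 * 1 := by ring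
      _ ≤ Δ * (q 0 ^ 2 * q 1 ^ 2) * (Δ * t ^ 4) * t ^ 2 := by
          gcongr
          exact one_le_pow₀ ht
      _ = V := by ring
  have h02V : Δ * (q 0 ^ 2 * q 2 ^ 2) ≤ V := by
    refine le_trans ?_ hΔV
    have := hq0 2
    gcongr
  have h13V : Δ * (q 1 ^ 2 * q 3 ^ 2) ≤ V := by
    refine le_trans ?_ hΔV
    rw [mul_comm (q 1 ^ 2)]
    have := hq0 3
    gcongr
  have h0123V : Δ ^ 2 * (q 0 ^ 2 * q 1 ^ 2) * (q 2 * q 3) ^ 2 ≤ V :=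
    calc _ ≤ Δ ^ 2 * (q 0 ^ 2 * q 1 ^ 2) * (t ^ 3) ^ 2 := by
          have := hq0 2
          have := hq0 3
          gcongr
      _ = V := by ring
  linarith

lemma card_nearZeroBox_le_of_sq_le_pow_four (hs : ∀ j, |s j| = 1) (hq : ∀ j, (N j : ℝ) = q j ^ 4)
    (hq1 : ∀ j, 1 ≤ q j) (hqa : Antitone q) (ht : 1 ≤ t) (hqt : q 0 ^ 2 ≤ t ^ 3)
    (hΔt : 1 ≤ Δ * t ^ 4) (hΔN : 8 * Δ * √(N 0) < 1) (h01 : q 0 ≤ 5 / 2 * q 1)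
    (htq : t ^ 2 ≤ q 0 ^ 4) :
    (#(nearZeroBox s N Δ) : ℝ) ≤ 2100 * (t ^ 3 * Δ * ∏ j, q j ^ 3) := by
  have hq0 (j : Fin 4) : 0 ≤ q j := zero_le_one.trans (hq1 j)
  have hΔ : 0 < Δ := pos_of_mul_pos_left (zero_lt_one.trans_le hΔt) (by positivity)
  have hprod : 0 ≤ ∏ j, q j ^ 3 := prod_nonneg fun j _ => pow_nonneg (hq0 j) 3
  have hcard := card_nearZeroBox_sq_le hs (pos_of_eq_pow_four hq hq1)
    (antitone_of_eq_pow_four hq hq1 hqa) hΔ hΔN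
  have hsqrt (j : Fin 4) : √(N j : ℝ) = q j ^ 2 := sqrt_eq_sq_of_eq_pow_four (hq j)
  simp only [hsqrt] at hcard
  simp only [hq] at hcard
  refine (sq_le_sq₀ (Nat.cast_nonneg _) (by positivity)).mp ?_
  calc _ ≤ _ := hcard
    _ = 9 * (q 0 ^ 4 * q 1 ^ 4 * q 2 ^ 6 * q 3 ^ 6) * ((20 + 675 * (Δ * (q 0 ^ 2 * q 2 ^ 2))) *
          (20 + 675 * (Δ * (q 1 ^ 2 * q 3 ^ 2)))) := by ring
    _ ≤ 9 * (q 0 ^ 4 * q 1 ^ 4 * q 2 ^ 6 * q 3 ^ 6) *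
          (490000 * (t ^ 6 * Δ ^ 2 * (q 0 ^ 2 * q 1 ^ 2))) :=
        mul_le_mul_of_nonneg_left (energy_mul_energy_le hq1 hqa ht hqt hΔ hΔt h01 htq)
          (by positivity)
    _ = (2100 * (t ^ 3 * Δ * ∏ j, q j ^ 3)) ^ 2 := by
        rw [Fin.prod_univ_four]
        ring

lemma nearPell_bound_le (hq1 : ∀ j, 1 ≤ q j) (hqa : Antitone q) (hΔ : 0 < Δ)
    (hΔt : 1 ≤ Δ * t ^ 4) (h01 : q 0 ≤ 5 / 2 * q 1) (hqt : q 0 ^ 2 ≤ t) :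
    Δ * q 0 ^ 6 * q 0 ^ 4 * (q 2 ^ 4 * q 3 ^ 4) +
      √Δ * q 0 ^ 3 * q 0 ^ 4 * (q 2 ^ 3 * q 3 ^ 3) ≤ 32 * (t ^ 3 * Δ * ∏ j, q j ^ 3) := by
  have hq0 (j : Fin 4) : 0 ≤ q j := zero_le_one.trans (hq1 j)
  have := hq0 0
  have := hq0 1
  have := hq0 2
  have := hq0 3
  have h20 : q 2 ≤ q 0 := hqa (by decide)
  have h30 : q 3 ≤ q 0 := hqa (by decide)
  have ht1 : 1 ≤ t := (one_le_pow₀ (hq1 0)).trans hqt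
  have hcube : q 0 ^ 3 ≤ 16 * q 1 ^ 3 :=
    calc q 0 ^ 3 ≤ (5 / 2 * q 1) ^ 3 := by gcongr
      _ ≤ 16 * q 1 ^ 3 := by
          rw [mul_pow]
          gcongr
          norm_num
  have hsqrt : 1 ≤ √Δ * t ^ 2 := by
    rw [← Real.sqrt_sq (by positivity : 0 ≤ t ^ 2), ← Real.sqrt_mul hΔ.le]
    exact Real.one_le_sqrt.mpr (hΔt.trans_eq (by ring))
  have hfst : Δ * q 0 ^ 6 * q 0 ^ 4 * (q 2 ^ 4 * q 3 ^ 4) ≤ 16 * (t ^ 3 * Δ * ∏ j, q j ^ 3) :=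
    calc _ = Δ * (q 0 ^ 3 * q 0 ^ 3 * q 2 ^ 3 * q 3 ^ 3) * (q 0 ^ 4 * (q 2 * q 3)) := by ring
      _ ≤ Δ * (q 0 ^ 3 * (16 * q 1 ^ 3) * q 2 ^ 3 * q 3 ^ 3) * (q 0 ^ 4 * (q 0 * q 0)) := by
          gcongr
      _ = 16 * ((q 0 ^ 2) ^ 3 * Δ * ∏ j, q j ^ 3) := by
          rw [Fin.prod_univ_four]
          ring
      _ ≤ 16 * (t ^ 3 * Δ * ∏ j, q j ^ 3) := by
          have := prod_nonneg fun j (_ : j ∈ univ) => pow_nonneg (hq0 j) 3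
          gcongr
  have hsnd : √Δ * q 0 ^ 3 * q 0 ^ 4 * (q 2 ^ 3 * q 3 ^ 3) ≤
      16 * (t ^ 3 * Δ * ∏ j, q j ^ 3) :=
    calc _ = √Δ * (q 0 ^ 3 * q 0 ^ 3 * q 2 ^ 3 * q 3 ^ 3) * q 0 * 1 := by ring
      _ ≤ √Δ * (q 0 ^ 3 * (16 * q 1 ^ 3) * q 2 ^ 3 * q 3 ^ 3) * t * (√Δ * t ^ 2) := by
          gcongr
          exact (le_self_pow₀ (hq1 0) two_ne_zero).trans hqt
      _ = 16 * (t ^ 3 * √Δ ^ 2 * ∏ j, q j ^ 3) := by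
          rw [Fin.prod_univ_four]
          ring
      _ = 16 * (t ^ 3 * Δ * ∏ j, q j ^ 3) := by rw [Real.sq_sqrt hΔ.le]
  linarith

lemma card_nearZeroBox_le_of_sq_le (hs : ∀ j, |s j| = 1) (hq : ∀ j, (N j : ℝ) = q j ^ 4)
    (hq1 : ∀ j, 1 ≤ q j) (hqa : Antitone q) (hΔt : 1 ≤ Δ * t ^ 4) (hΔN : 8 * Δ * √(N 0) < 1)
    (h01 : q 0 ≤ 5 / 2 * q 1) (hqt : q 0 ^ 2 ≤ t) {D : ℝ}
    (hD : ∀ p < (8 * N 0) ^ 2, (#p.divisors : ℝ) ≤ D) :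
    (#(nearZeroBox s N Δ) : ℝ) ≤
      96000000 * (D ^ 3 * (1 + log (8 * N 0))) * (t ^ 3 * Δ * ∏ j, q j ^ 3) := by
  have hq0 (j : Fin 4) : 0 ≤ q j := zero_le_one.trans (hq1 j)
  have hΔ : 0 < Δ := pos_of_mul_pos_left (zero_lt_one.trans_le hΔt) (by positivity)
  have hpos := pos_of_eq_pow_four hq hq1
  have hD1 : 1 ≤ D := by simpa using hD 1 (by nlinarith [hpos 0])
  have hL : 0 ≤ 1 + log (8 * N 0 : ℝ) :=
    add_nonneg zero_le_one (by exact_mod_cast Real.log_natCast_nonneg (8 * N 0))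
  have hcard := card_nearZeroBox_le_of_card_divisors_le hs hpos
    (antitone_of_eq_pow_four hq hq1 hqa) hΔ.le hΔN hD
  have hcube : (N 0 : ℝ) * √(N 0) = (q 0 ^ 3) ^ 2 := by
    rw [sqrt_eq_sq_of_eq_pow_four (hq 0), hq]
    ring
  rw [Real.mul_rpow (Nat.cast_nonneg _) (Nat.cast_nonneg _),
    rpow_three_div_four_eq_pow (hq0 2) (hq 2), rpow_three_div_four_eq_pow (hq0 3) (hq 3),
    hcube, Real.sqrt_mul hΔ.le, Real.sqrt_sq (pow_nonneg (hq0 0) 3)] at hcard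
  generalize 1 + log (8 * N 0 : ℝ) = L at hcard hL ⊢
  calc _ ≤ _ := hcard
    _ = 3000000 * D ^ 3 * L * (Δ * q 0 ^ 6 * q 0 ^ 4 * (q 2 ^ 4 * q 3 ^ 4) +
          √Δ * q 0 ^ 3 * q 0 ^ 4 * (q 2 ^ 3 * q 3 ^ 3)) := by
        simp only [hq]
        ring
    _ ≤ 3000000 * D ^ 3 * L * (32 * (t ^ 3 * Δ * ∏ j, q j ^ 3)) := by
        gcongr
        exact nearPell_bound_le hq1 hqa hΔ hΔt h01 hqt
    _ = _ := by ring

lemma le_mul_of_nonempty_nearZeroBox_of_eq_pow_four (hs : ∀ j, |s j| = 1)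
    (hq : ∀ j, (N j : ℝ) = q j ^ 4) (hq1 : ∀ j, 1 ≤ q j) (hqa : Antitone q)
    (hΔN : 8 * Δ * √(N 0) < 1) (hne : (nearZeroBox s N Δ).Nonempty) : q 0 ≤ 5 / 2 * q 1 := by
  have hclose := le_mul_of_nonempty_nearZeroBox hs (antitone_of_eq_pow_four hq hq1 hqa) hΔN hne
  rw [hq, hq] at hclose
  have hq1' := zero_le_one.trans (hq1 1)
  refine le_of_pow_le_pow_left₀ four_ne_zero (by positivity) (hclose.trans ?_)
  rw [mul_pow]
  gcongr
  norm_num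

lemma card_nearZeroBox_le_of_eq_pow_four (hs : ∀ j, |s j| = 1) (hq : ∀ j, (N j : ℝ) = q j ^ 4)
    (hq1 : ∀ j, 1 ≤ q j) (hqa : Antitone q) (ht : 1 ≤ t) (hqt : q 0 ^ 2 ≤ t ^ 3)
    (hΔt : 1 ≤ Δ * t ^ 4) {D : ℝ} (hD : ∀ p : ℕ, (p : ℝ) ≤ 64 * t ^ 8 → (#p.divisors : ℝ) ≤ D) :
    (#(nearZeroBox s N Δ) : ℝ) ≤
      96000000 * (D ^ 3 * (1 + log (64 * t ^ 8))) * (t ^ 3 * Δ * ∏ j, q j ^ 3) := by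
  have hΔ : 0 < Δ := pos_of_mul_pos_left (zero_lt_one.trans_le hΔt) (by positivity)
  have ht8 : 1 ≤ t ^ 8 := one_le_pow₀ ht
  have hD1 : 1 ≤ D := by simpa using hD 1 (by rw [Nat.cast_one]; linarith)
  have hlog0 : 0 ≤ log (64 * t ^ 8) := Real.log_nonneg (by linarith)
  have hDL : 1 ≤ D ^ 3 * (1 + log (64 * t ^ 8)) :=
    one_le_mul_of_one_le_of_one_le (one_le_pow₀ hD1) (by linarith)
  have hX : 0 ≤ t ^ 3 * Δ * ∏ j, q j ^ 3 := mul_nonneg (by positivity)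
    (prod_nonneg fun j _ => pow_nonneg (zero_le_one.trans (hq1 j)) 3)
  rcases le_or_gt 1 (8 * Δ * √(N 0)) with hΔN | hΔN
  · refine (card_nearZeroBox_le_of_one_le (hs 0) hq hq1 hqa hqt hΔ.le hΔN).trans ?_
    gcongr
    linarith
  rcases (nearZeroBox s N Δ).eq_empty_or_nonempty with hE | hne
  · rw [hE, card_empty, Nat.cast_zero]
    positivity
  have h01 := le_mul_of_nonempty_nearZeroBox_of_eq_pow_four hs hq hq1 hqa hΔN hne
  rcases le_total (t ^ 2) (q 0 ^ 4) with htq | htq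
  · refine (card_nearZeroBox_le_of_sq_le_pow_four hs hq hq1 hqa ht hqt hΔt hΔN h01 htq).trans ?_
    gcongr
    linarith
  have hN8 : 64 * (N 0 : ℝ) ^ 2 ≤ 64 * t ^ 8 := by
    rw [hq]
    calc 64 * (q 0 ^ 4) ^ 2 ≤ 64 * (t ^ 2) ^ 2 := by gcongr
      _ = 64 * t ^ 4 := by ring
      _ ≤ 64 * t ^ 8 := by
          gcongr
          norm_num
  have hN0 : (1 : ℝ) ≤ N 0 := by exact_mod_cast pos_of_eq_pow_four hq hq1 0
  refine (card_nearZeroBox_le_of_sq_le hs hq hq1 hqa hΔt hΔN h01 ?_ fun p hp =>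
    hD p (le_trans ?_ hN8)).trans ?_
  · exact le_of_pow_le_pow_left₀ two_ne_zero (by positivity) (htq.trans_eq' (by ring))
  · rw [show (64 : ℝ) * (N 0 : ℝ) ^ 2 = ((8 * N 0) ^ 2 : ℕ) by push_cast; ring]
    exact_mod_cast hp.le
  · gcongr
    · norm_num
    · nlinarith

lemma card_nearZeroBox_le_of_antitone {T D : ℝ} (hT : 1 ≤ T) (hΔ : T ^ (-(1 : ℝ) / 2) ≤ Δ)
    (hs : ∀ j, |s j| = 1) (hpos : ∀ j, 0 < N j) (hN : Antitone N)
    (hNT : ∀ j, (N j : ℝ) ≤ T ^ ((3 : ℝ) / 4))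
    (hD : ∀ p : ℕ, (p : ℝ) ≤ 64 * T → (#p.divisors : ℝ) ≤ D) :
    (#(nearZeroBox s N Δ) : ℝ) ≤ 96000000 * (D ^ 3 * (1 + log (64 * T))) *
      (T ^ ((3 : ℝ) / 8) * Δ * (∏ j, (N j : ℝ)) ^ ((3 : ℝ) / 4)) := by
  have hT0 : 0 < T := zero_lt_one.trans_le hT
  have hpow {x : ℝ} (hx : 0 ≤ x) (a : ℝ) (k : ℕ) : (x ^ a) ^ k = x ^ (a * k) := by
    rw [← Real.rpow_natCast, ← Real.rpow_mul hx]
  have hN0 (j : Fin 4) : (0 : ℝ) ≤ N j := Nat.cast_nonneg _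
  have ht8 : (T ^ ((1 : ℝ) / 8)) ^ 8 = T := by rw [hpow hT0.le]; norm_num
  have ht3 : (T ^ ((1 : ℝ) / 8)) ^ 3 = T ^ ((3 : ℝ) / 8) := by rw [hpow hT0.le]; norm_num
  have hprod : ∏ j, ((N j : ℝ) ^ ((1 : ℝ) / 4)) ^ 3 = (∏ j, (N j : ℝ)) ^ ((3 : ℝ) / 4) := by
    rw [← Real.finsetProd_rpow _ _ fun j _ => hN0 j]
    refine prod_congr rfl fun j _ => ?_
    rw [hpow (hN0 j)]
    norm_num
  have hqt : ((N 0 : ℝ) ^ ((1 : ℝ) / 4)) ^ 2 ≤ (T ^ ((1 : ℝ) / 8)) ^ 3 := by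
    refine le_of_pow_le_pow_left₀ two_ne_zero (by positivity) ?_
    rw [← pow_mul, ← pow_mul, hpow (hN0 0), hpow hT0.le]
    refine Eq.trans_le ?_ ((hNT 0).trans_eq ?_) <;> norm_num
  have hΔt : 1 ≤ Δ * (T ^ ((1 : ℝ) / 8)) ^ 4 := by
    rw [hpow hT0.le]
    refine (mul_le_mul_of_nonneg_right hΔ (by positivity)).trans_eq' ?_
    rw [← Real.rpow_add hT0]
    norm_num
  have hcard := card_nearZeroBox_le_of_eq_pow_four (N := N)
    (q := fun j => (N j : ℝ) ^ ((1 : ℝ) / 4)) hs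
    (fun j => by rw [hpow (hN0 j)]; norm_num)
    (fun j => Real.one_le_rpow (by exact_mod_cast hpos j) (by norm_num))
    (fun i j hij => Real.rpow_le_rpow (hN0 j) (by exact_mod_cast hN hij) (by norm_num))
    (Real.one_le_rpow hT (by norm_num)) hqt hΔt (by rwa [ht8])
  rwa [ht8, ht3, hprod] at hcard

theorem exists_card_nearZeroBox_le_of_antitone {ε : ℝ} (hε : 0 < ε) : ∃ C : ℝ, 0 < C ∧
    ∀ {T Δ : ℝ} {s : Fin 4 → ℝ} {N : Fin 4 → ℕ}, 1 ≤ T → T ^ (-(1 : ℝ) / 2) ≤ Δ →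
      (∀ j, |s j| = 1) → (∀ j, 0 < N j) → Antitone N → (∀ j, (N j : ℝ) ≤ T ^ ((3 : ℝ) / 4)) →
      (#(nearZeroBox s N Δ) : ℝ) ≤
        C * T ^ ((3 : ℝ) / 8 + ε) * Δ * (∏ j, (N j : ℝ)) ^ ((3 : ℝ) / 4) := by
  obtain ⟨C₁, hC₁, hdiv⟩ := exists_card_divisors_le_rpow (div_pos hε four_pos)
  obtain ⟨C₂, hC₂, hlog⟩ := exists_one_add_log_le_rpow (div_pos hε four_pos)
  refine ⟨96000000 * (C₁ ^ 3 * C₂ * 64 ^ ε), by positivity,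
    fun {T Δ s N} hT hΔ hs hpos hN hNT => ?_⟩
  have hT0 : 0 < T := zero_lt_one.trans_le hT
  have hΔ0 : 0 < Δ := (Real.rpow_pos_of_pos hT0 _).trans_le hΔ
  have hTε : ((64 * T) ^ (ε / 4)) ^ 3 * (64 * T) ^ (ε / 4) = 64 ^ ε * T ^ ε := by
    rw [← pow_succ, ← Real.rpow_natCast, ← Real.rpow_mul (by positivity),
      ← Real.mul_rpow (by norm_num) hT0.le]
    norm_num
  have hD (p : ℕ) (hp : (p : ℝ) ≤ 64 * T) : (#p.divisors : ℝ) ≤ C₁ * (64 * T) ^ (ε / 4) :=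
    (hdiv p).trans (by gcongr)
  calc _ ≤ _ := card_nearZeroBox_le_of_antitone hT hΔ hs hpos hN hNT hD
    _ ≤ 96000000 * ((C₁ * (64 * T) ^ (ε / 4)) ^ 3 * (C₂ * (64 * T) ^ (ε / 4))) *
          (T ^ ((3 : ℝ) / 8) * Δ * (∏ j, (N j : ℝ)) ^ ((3 : ℝ) / 4)) := by
        gcongr
        exact hlog _ (by linarith)
    _ = 96000000 * (C₁ ^ 3 * C₂ * (((64 * T) ^ (ε / 4)) ^ 3 * (64 * T) ^ (ε / 4))) *
          (T ^ ((3 : ℝ) / 8) * Δ * (∏ j, (N j : ℝ)) ^ ((3 : ℝ) / 4)) := by ring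
    _ = _ := by
        rw [hTε, Real.rpow_add hT0]
        ring

theorem exists_card_nearZeroBox_le {ε : ℝ} (hε : 0 < ε) : ∃ C : ℝ, 0 < C ∧
    ∀ {T Δ : ℝ} {s : Fin 4 → ℝ} {N : Fin 4 → ℕ}, 1 ≤ T → T ^ (-(1 : ℝ) / 2) ≤ Δ →
      (∀ j, |s j| = 1) → (∀ j, 0 < N j) → (∀ j, (N j : ℝ) ≤ T ^ ((3 : ℝ) / 4)) →
      (#(nearZeroBox s N Δ) : ℝ) ≤
        C * T ^ ((3 : ℝ) / 8 + ε) * Δ * (∏ j, (N j : ℝ)) ^ ((3 : ℝ) / 4) := by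
  obtain ⟨C, hC, hcard⟩ := exists_card_nearZeroBox_le_of_antitone hε
  refine ⟨C, hC, fun {T Δ s N} hT hΔ hs hpos hNT => ?_⟩
  set e : Fin 4 ≃ Fin 4 := Fin.revPerm.trans (Tuple.sort N)
  have hN : Antitone (N ∘ e) := (Tuple.monotone_sort N).comp_antitone Fin.rev_anti
  rw [← card_nearZeroBox_comp_equiv e, ← e.prod_comp]
  exact hcard hT hΔ (fun j => hs (e j)) (fun j => hpos (e j)) hN fun j => hNT (e j)

end BoxCount

section WeightedSum

variable {T a : ℝ} {s : Fin 4 → ℝ} {n : Fin 4 → ℕ}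

lemma le_two_pow_clog_mul_rpow (hT : 0 < T) :
    a ≤ 2 ^ Nat.clog 2 ⌈√T * a⌉₊ * T ^ (-(1 : ℝ) / 2) := by
  have hceil : √T * a ≤ 2 ^ Nat.clog 2 ⌈√T * a⌉₊ :=
    (Nat.le_ceil _).trans (by exact_mod_cast Nat.le_pow_clog one_lt_two _)
  rw [neg_div, Real.rpow_neg hT.le, ← Real.sqrt_eq_rpow, ← div_eq_mul_inv,
    le_div_iff₀ (Real.sqrt_pos.mpr hT), mul_comm]
  exact hceil

lemma min_le_div_two_pow_clog (hT : 0 < T) (ha : 0 < a) :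
    min T (√T / a) ≤ 2 * T / 2 ^ Nat.clog 2 ⌈√T * a⌉₊ := by
  rcases hi : Nat.clog 2 ⌈√T * a⌉₊ with _ | i
  · rw [pow_zero, div_one]
    exact (min_le_left _ _).trans (by linarith)
  have hlt : (2 : ℝ) ^ i < √T * a := by
    have : 2 ^ i < ⌈√T * a⌉₊ := (Nat.lt_clog_iff_pow_lt one_lt_two).mp (by omega)
    exact_mod_cast Nat.lt_ceil.mp this
  refine (min_le_right _ _).trans ?_
  rw [div_le_div_iff₀ ha (by positivity), pow_succ]
  calc √T * (2 ^ i * 2) ≤ √T * (√T * a * 2) := by gcongr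
    _ = √T * √T * 2 * a := by ring
    _ = 2 * T * a := by rw [Real.mul_self_sqrt hT.le, mul_comm T]

lemma clog_ceil_add_one_le (hT : 1 ≤ T) :
    (Nat.clog 2 ⌈4 * T⌉₊ + 1 : ℝ) ≤ 8 * (1 + log T) := by
  have hlog : 0 ≤ log T := Real.log_nonneg hT
  have hpow : ((⌈4 * T⌉₊ : ℕ) : ℝ) ≤ 2 ^ 3 * T := by
    linarith [Nat.ceil_lt_add_one (show 0 ≤ 4 * T by linarith)]
  have hceil : (1 : ℝ) ≤ (⌈4 * T⌉₊ : ℕ) := by linarith [Nat.le_ceil (4 * T)]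
  have hlogb : logb 2 (⌈4 * T⌉₊ : ℕ) ≤ 3 + 2 * log T :=
    calc logb 2 (⌈4 * T⌉₊ : ℕ) ≤ logb 2 (2 ^ 3 * T) :=
          Real.logb_le_logb_of_le one_lt_two (by linarith) hpow
      _ = 3 + log T / log 2 := by
          rw [Real.logb_mul (by norm_num) (by linarith), Real.logb_pow,
            Real.logb_self_eq_one one_lt_two, mul_one, Nat.cast_ofNat, Real.logb]
      _ ≤ 3 + 2 * log T := by
          rw [add_le_add_iff_left, div_le_iff₀ (Real.log_pos one_lt_two)]
          nlinarith [Real.log_two_gt_d9]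
  have hclog : (Nat.clog 2 ⌈4 * T⌉₊ : ℝ) < logb 2 (⌈4 * T⌉₊ : ℕ) + 1 := by
    have := Nat.ceil_lt_add_one (Real.logb_nonneg one_lt_two hceil)
    exact_mod_cast (Real.natCeil_logb_natCast 2 ⌈4 * T⌉₊) ▸ this
  linarith

lemma sqrt_mul_abs_sqrtForm_le (hT : 0 ≤ T) (hs : ∀ j, |s j| = 1) (hn : ∀ j, (n j : ℝ) ≤ T) :
    √T * |sqrtForm s n| ≤ 4 * T := by
  have hform : |sqrtForm s n| ≤ 4 * √T :=
    calc |sqrtForm s n| ≤ ∑ j, |s j * √(n j)| := abs_sum_le_sum_abs _ _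
      _ ≤ ∑ _j : Fin 4, √T := sum_le_sum fun j _ => by
          rw [abs_mul, hs, one_mul, abs_of_nonneg (Real.sqrt_nonneg _)]
          exact Real.sqrt_le_sqrt (hn j)
      _ = 4 * √T := by simp
  calc √T * |sqrtForm s n| ≤ √T * (4 * √T) := by gcongr
    _ = 4 * (√T * √T) := by ring
    _ = 4 * T := by rw [Real.mul_self_sqrt hT]

/-- The contribution of `n`, up to constants and divisor functions, to `∫ S₂ / T`: the weight
`(n₁n₂n₃n₄) ^ (-3/4)` times the bound `min T (√T / |α|)` for the mean of `cos (4πα√x - φ)`. -/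
def oscWeight (T : ℝ) (s : Fin 4 → ℝ) (n : Fin 4 → ℕ) : ℝ :=
  (∏ j, (n j : ℝ)) ^ (-(3 : ℝ) / 4) * min T (√T / |sqrtForm s n|)

/-- The dyadic scales of the variables `n j` and of `√T |∑ j, s j √(n j)|`; the latter is rounded
up to at least `1`. -/
def dyadicScale (T : ℝ) (s : Fin 4 → ℝ) (n : Fin 4 → ℕ) : (Fin 4 → ℕ) × ℕ :=
  (fun j => Nat.log 2 (n j), Nat.clog 2 ⌈√T * |sqrtForm s n|⌉₊)

lemma oscWeight_nonneg (hT : 0 ≤ T) : 0 ≤ oscWeight T s n := by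
  unfold oscWeight
  positivity

lemma dyadicScale_mem (hT : 0 ≤ T) (hs : ∀ j, |s j| = 1) (hn : ∀ j, (n j : ℝ) ≤ T) :
    dyadicScale T s n ∈ Fintype.piFinset (fun _ => range (Nat.clog 2 ⌈4 * T⌉₊ + 1)) ×ˢ
      range (Nat.clog 2 ⌈4 * T⌉₊ + 1) := by
  simp only [dyadicScale, mem_product, Fintype.mem_piFinset, mem_range, Nat.lt_succ_iff]
  refine ⟨fun j => (Nat.log_le_clog 2 _).trans (Nat.clog_mono_right 2 ?_),
    Nat.clog_mono_right 2 (Nat.ceil_mono (sqrt_mul_abs_sqrtForm_le hT hs hn))⟩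
  have : (n j : ℝ) ≤ ⌈4 * T⌉₊ := by linarith [hn j, Nat.le_ceil (4 * T)]
  exact_mod_cast this

lemma mem_nearZeroBox_dyadicScale (hT : 0 < T) (hn : ∀ j, 0 < n j) (h0 : sqrtForm s n ≠ 0) :
    n ∈ nearZeroBox s (fun j => 2 ^ (dyadicScale T s n).1 j)
      (2 ^ (dyadicScale T s n).2 * T ^ (-(1 : ℝ) / 2)) :=
  mem_nearZeroBox.mpr ⟨fun j => mem_Ico.mpr ⟨Nat.pow_log_le_self 2 (hn j).ne',
    (Nat.lt_pow_succ_log_self one_lt_two _).trans_eq (pow_succ' _ _)⟩, h0,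
    le_two_pow_clog_mul_rpow hT⟩

lemma oscWeight_le (hT : 0 < T) (hn : ∀ j, 0 < n j) (h0 : sqrtForm s n ≠ 0) :
    oscWeight T s n ≤ (∏ j, ((2 ^ (dyadicScale T s n).1 j : ℕ) : ℝ)) ^ (-(3 : ℝ) / 4) *
      (2 * T / 2 ^ (dyadicScale T s n).2) := by
  refine mul_le_mul ?_ (min_le_div_two_pow_clog hT (abs_pos.mpr h0)) (by positivity)
    (by positivity)
  refine Real.rpow_le_rpow_of_nonpos (by positivity) (prod_le_prod (fun _ _ => by positivity)
    fun j _ => ?_) (by norm_num)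
  exact_mod_cast Nat.pow_log_le_self 2 (hn j).ne'

lemma sum_oscWeight_le_of_dyadicScale_eq {S : Finset (Fin 4 → ℕ)} {k : Fin 4 → ℕ} {i : ℕ}
    (hT : 0 < T)
    (hS : ∀ n ∈ S, (∀ j, 0 < n j) ∧ sqrtForm s n ≠ 0 ∧ dyadicScale T s n = (k, i)) :
    ∑ n ∈ S, oscWeight T s n ≤
      #(nearZeroBox s (fun j => 2 ^ k j) (2 ^ i * T ^ (-(1 : ℝ) / 2))) *
        ((∏ j, ((2 ^ k j : ℕ) : ℝ)) ^ (-(3 : ℝ) / 4) * (2 * T / 2 ^ i)) := by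
  have hsub : S ⊆ nearZeroBox s (fun j => 2 ^ k j) (2 ^ i * T ^ (-(1 : ℝ) / 2)) := fun n hn => by
    obtain ⟨hpos, h0, hscale⟩ := hS n hn
    simpa only [hscale] using mem_nearZeroBox_dyadicScale hT hpos h0
  have hweight : ∀ n ∈ S, oscWeight T s n ≤
      (∏ j, ((2 ^ k j : ℕ) : ℝ)) ^ (-(3 : ℝ) / 4) * (2 * T / 2 ^ i) := fun n hn => by
    obtain ⟨hpos, h0, hscale⟩ := hS n hn
    simpa only [hscale] using oscWeight_le hT hpos h0
  refine (sum_le_card_nsmul _ _ _ hweight).trans ?_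
  rw [nsmul_eq_mul]
  gcongr

lemma exists_sum_oscWeight_dyadicScale_le {ε : ℝ} (hε : 0 < ε) : ∃ C : ℝ, 0 < C ∧
    ∀ {T : ℝ} {s : Fin 4 → ℝ} {S : Finset (Fin 4 → ℕ)} (y : (Fin 4 → ℕ) × ℕ), 1 ≤ T →
      (∀ j, |s j| = 1) →
      (∀ n ∈ S, (∀ j, 0 < n j ∧ (n j : ℝ) ≤ T ^ ((3 : ℝ) / 4)) ∧ sqrtForm s n ≠ 0) →
      (∀ n ∈ S, dyadicScale T s n = y) →
      ∑ n ∈ S, oscWeight T s n ≤ C * T ^ ((7 : ℝ) / 8 + ε) := by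
  obtain ⟨C, hC, hcard⟩ := exists_card_nearZeroBox_le hε
  refine ⟨2 * C, by positivity, fun {T s S} ⟨k, i⟩ hT hs hS hy => ?_⟩
  have hT0 : 0 < T := zero_lt_one.trans_le hT
  rcases S.eq_empty_or_nonempty with rfl | ⟨m, hm⟩
  · rw [sum_empty]
    positivity
  have hk (j : Fin 4) : ((2 ^ k j : ℕ) : ℝ) ≤ T ^ ((3 : ℝ) / 4) := by
    refine le_trans (Nat.cast_le.mpr ?_) ((hS m hm).1 j).2
    rw [← show Nat.log 2 (m j) = k j from congrFun (Prod.ext_iff.mp (hy m hm)).1 j]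
    exact Nat.pow_log_le_self 2 ((hS m hm).1 j).1.ne'
  have hbox := hcard hT (le_mul_of_one_le_left (Real.rpow_nonneg hT0.le _)
    (one_le_pow₀ one_le_two : (1 : ℝ) ≤ 2 ^ i)) hs (fun j => by positivity) hk
  have hP : 0 < ∏ j, ((2 ^ k j : ℕ) : ℝ) := prod_pos fun j _ => by positivity
  refine (sum_oscWeight_le_of_dyadicScale_eq hT0 fun n hn =>
    ⟨fun j => ((hS n hn).1 j).1, (hS n hn).2, hy n hn⟩).trans ?_
  set P : ℝ := ∏ j, ((2 ^ k j : ℕ) : ℝ)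
  calc _ ≤ C * T ^ ((3 : ℝ) / 8 + ε) * (2 ^ i * T ^ (-(1 : ℝ) / 2)) * P ^ ((3 : ℝ) / 4) *
          (P ^ (-(3 : ℝ) / 4) * (2 * T / 2 ^ i)) := by gcongr
    _ = 2 * C * (T ^ ((3 : ℝ) / 8 + ε) * T ^ (-(1 : ℝ) / 2) * T ^ (1 : ℝ)) *
          (P ^ ((3 : ℝ) / 4) * P ^ (-(3 : ℝ) / 4)) := by
        rw [Real.rpow_one]
        field_simp
    _ = 2 * C * T ^ ((7 : ℝ) / 8 + ε) := by
        rw [← Real.rpow_add hP, ← Real.rpow_add hT0, ← Real.rpow_add hT0]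
        ring_nf
        rw [Real.rpow_zero, mul_one]

theorem exists_sum_oscWeight_le {ε : ℝ} (hε : 0 < ε) : ∃ C : ℝ, 0 < C ∧
    ∀ {T : ℝ} {s : Fin 4 → ℝ} {S : Finset (Fin 4 → ℕ)}, 1 ≤ T → (∀ j, |s j| = 1) →
      (∀ n ∈ S, (∀ j, 0 < n j ∧ (n j : ℝ) ≤ T ^ ((3 : ℝ) / 4)) ∧ sqrtForm s n ≠ 0) →
      ∑ n ∈ S, oscWeight T s n ≤ C * T ^ ((7 : ℝ) / 8 + ε) := by
  obtain ⟨C, hC, hfibre⟩ := exists_sum_oscWeight_dyadicScale_le (half_pos hε)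
  obtain ⟨D, hD, hlog⟩ := exists_one_add_log_le_rpow (ε := ε / 10) (by positivity)
  refine ⟨C * (8 * D) ^ 5, by positivity, fun {T s S} hT hs hS => ?_⟩
  have hT0 : 0 < T := zero_lt_one.trans_le hT
  set K := Nat.clog 2 ⌈4 * T⌉₊ + 1
  have hK : (K : ℝ) ≤ 8 * (D * T ^ (ε / 10)) := by
    rw [Nat.cast_add_one]
    exact (clog_ceil_add_one_le hT).trans (by gcongr; exact hlog T hT)
  have hmem : ∀ n ∈ S, dyadicScale T s n ∈
      Fintype.piFinset (fun _ : Fin 4 => range K) ×ˢ range K := fun n hn =>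
    dyadicScale_mem hT0.le hs fun j => ((hS n hn).1 j).2.trans
      (Real.rpow_le_self_of_one_le hT (by norm_num))
  calc ∑ n ∈ S, oscWeight T s n
      = ∑ y ∈ Fintype.piFinset (fun _ : Fin 4 => range K) ×ˢ range K,
          ∑ n ∈ S with dyadicScale T s n = y, oscWeight T s n :=
        (sum_fiberwise_of_maps_to hmem _).symm
    _ ≤ (K : ℝ) ^ 5 * (C * T ^ ((7 : ℝ) / 8 + ε / 2)) := by
        refine (sum_le_card_nsmul _ _ _ fun y _ => hfibre y hT hs
          (fun n hn => hS n (mem_filter.mp hn).1) fun n hn => (mem_filter.mp hn).2).trans_eq ?_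
        rw [nsmul_eq_mul, card_product, Fintype.card_piFinset_const, card_range, ← pow_succ,
          Nat.cast_pow]
    _ ≤ (8 * (D * T ^ (ε / 10))) ^ 5 * (C * T ^ ((7 : ℝ) / 8 + ε / 2)) := by gcongr
    _ = C * (8 * D) ^ 5 * ((T ^ (ε / 10)) ^ 5 * T ^ ((7 : ℝ) / 8 + ε / 2)) := by ring
    _ = C * (8 * D) ^ 5 * T ^ ((7 : ℝ) / 8 + ε) := by
        rw [← Real.rpow_natCast (T ^ _), ← Real.rpow_mul hT0.le, ← Real.rpow_add hT0]
        ring_nf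

end WeightedSum

section OscillatoryIntegral

variable {T c : ℝ} {f : ℝ → ℝ}

lemma abs_integral_half_le {B : ℝ} (hT : 0 ≤ T) (hf : ∀ x ∈ Set.Ioc (T / 2) T, |f x| ≤ B) :
    |∫ x in (T / 2)..T, f x| ≤ B * (T / 2) := by
  have hnorm := intervalIntegral.norm_integral_le_of_norm_le_const (f := f) (C := B)
    fun x hx => hf x (Set.uIoc_of_le (half_le_self hT) ▸ hx)
  rwa [Real.norm_eq_abs, sub_half, abs_of_nonneg (by positivity : 0 ≤ T / 2)] at hnorm

lemma hasDerivAt_mul_sqrt_mul_sin {x : ℝ} (hx : 0 < x) (hc : c ≠ 0) (φ : ℝ) :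
    HasDerivAt (fun x => x * (2 * √x / c) * sin (c * √x - φ))
      (x * cos (c * √x - φ) + 3 * √x / c * sin (c * √x - φ)) x := by
  obtain ⟨r, hr, rfl⟩ : ∃ r, 0 < r ∧ r ^ 2 = x :=
    ⟨√x, Real.sqrt_pos.mpr hx, Real.sq_sqrt hx.le⟩
  have hsqrt := Real.hasDerivAt_sqrt hx.ne'
  refine (((hasDerivAt_id' (r ^ 2)).mul ((hsqrt.const_mul 2).div_const c)).mul
    ((hsqrt.const_mul c).sub_const φ).sin).congr_deriv ?_
  simp only [Pi.mul_apply, Real.sqrt_sq hr.le]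
  field_simp
  ring

lemma abs_integral_mul_cos_le_sq (hT : 0 ≤ T) (φ : ℝ) :
    |∫ x in (T / 2)..T, x * cos (c * √x - φ)| ≤ 7 * T * T := by
  refine (abs_integral_half_le hT (B := T) fun x hx => ?_).trans (by nlinarith)
  have hx0 : 0 ≤ x := by linarith [hx.1]
  rw [abs_mul, abs_of_nonneg hx0]
  exact (mul_le_of_le_one_right hx0 (Real.abs_cos_le_one _)).trans hx.2

lemma abs_integral_mul_cos_le_div (hT : 0 < T) (hc : c ≠ 0) (φ : ℝ) :
    |∫ x in (T / 2)..T, x * cos (c * √x - φ)| ≤ 7 * T * (√T / |c|) := by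
  have hX : 0 ≤ T * (√T / |c|) := by positivity
  have hboundary {x : ℝ} (hx : 0 ≤ x) (hxT : x ≤ T) :
      |x * (2 * √x / c) * sin (c * √x - φ)| ≤ 2 * (T * (√T / |c|)) := by
    have hsin := Real.abs_sin_le_one (c * √x - φ)
    rw [abs_mul, abs_mul, abs_div, abs_mul, abs_two, abs_of_nonneg hx,
      abs_of_nonneg (Real.sqrt_nonneg x)]
    calc x * (2 * √x / |c|) * |sin (c * √x - φ)| ≤ T * (2 * √T / |c|) * 1 := by gcongr
      _ = 2 * (T * (√T / |c|)) := by ring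
  have herror : |∫ x in (T / 2)..T, 3 * √x / c * sin (c * √x - φ)| ≤
      3 * (√T / |c|) * (T / 2) := by
    refine abs_integral_half_le hT.le fun x hx => ?_
    have hsin := Real.abs_sin_le_one (c * √x - φ)
    rw [abs_mul, abs_div, abs_mul, abs_of_pos three_pos, abs_of_nonneg (Real.sqrt_nonneg x)]
    calc 3 * √x / |c| * |sin (c * √x - φ)| ≤ 3 * √T / |c| * 1 := by
          gcongr
          exact hx.2
      _ = 3 * (√T / |c|) := by ring
  have hcos : Continuous fun x => x * cos (c * √x - φ) := by fun_prop
  have hsin : Continuous fun x => 3 * √x / c * sin (c * √x - φ) := by fun_prop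
  have hparts := intervalIntegral.integral_eq_sub_of_hasDerivAt (a := T / 2) (b := T)
    (fun x hx => hasDerivAt_mul_sqrt_mul_sin
      ((half_pos hT).trans_le (Set.uIcc_of_le (half_le_self hT.le) ▸ hx).1) hc φ)
    ((hcos.add hsin).intervalIntegrable _ _)
  rw [intervalIntegral.integral_add (hcos.intervalIntegrable _ _) (hsin.intervalIntegrable _ _)]
    at hparts
  have hupper := abs_le.mp (hboundary hT.le le_rfl)
  have hlower := abs_le.mp (hboundary (half_pos hT).le (half_le_self hT.le))
  have herror' := abs_le.mp herror
  rw [abs_le]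
  constructor <;> linarith

lemma abs_integral_mul_cos_four_pi_le (hT : 0 < T) {α : ℝ} (hα : α ≠ 0) (φ : ℝ) :
    |∫ x in (T / 2)..T, x * cos (4 * π * α * √x - φ)| ≤
      32 * π ^ 4 * (T * min T (√T / |α|)) := by
  have h4π : 1 ≤ 4 * π := by linarith [Real.pi_gt_three]
  have hα0 : 0 < |α| := abs_pos.mpr hα
  have hαc : |α| ≤ |4 * π * α| := by
    rw [abs_mul, abs_of_nonneg (zero_le_one.trans h4π)]
    exact le_mul_of_one_le_left hα0.le h4π
  calc _ ≤ 7 * T * min T (√T / |4 * π * α|) := by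
        rw [mul_min_of_nonneg _ _ (by positivity)]
        exact le_min (abs_integral_mul_cos_le_sq hT.le φ)
          (abs_integral_mul_cos_le_div hT (by positivity) φ)
    _ ≤ 7 * T * min T (√T / |α|) := by gcongr
    _ = 7 * (T * min T (√T / |α|)) := by ring
    _ ≤ 32 * π ^ 4 * (T * min T (√T / |α|)) := by
        gcongr
        linarith [one_le_pow₀ (n := 4) (show 1 ≤ π by linarith [Real.pi_gt_three])]

lemma abs_integral_sum_le {ι : Type*} {S : Finset ι} {f : ι → ℝ → ℝ} {a b : ℝ}
    (hf : ∀ i ∈ S, Continuous (f i)) :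
    |∫ x in a..b, ∑ i ∈ S, f i x| ≤ ∑ i ∈ S, |∫ x in a..b, f i x| := by
  rw [intervalIntegral.integral_finsetSum fun i hi => (hf i hi).intervalIntegrable _ _]
  exact abs_sum_le_sum_abs _ _

end OscillatoryIntegral

section OffDiagonalSum

/-- The signs `(1, (-1) ^ i₁, (-1) ^ i₂, (-1) ^ i₃)` of the four square roots in `alphaNI`. -/
def signVec (i : Fin 2 × Fin 2 × Fin 2) : Fin 4 → ℝ :=
  ![1, (-1) ^ (i.1 : ℕ), (-1) ^ (i.2.1 : ℕ), (-1) ^ (i.2.2 : ℕ)]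

/-- The quadruple `n` of `alphaNI` as a vector. -/
def quadVec (n : ℕ × ℕ × ℕ × ℕ) : Fin 4 → ℕ := ![n.1, n.2.1, n.2.2.1, n.2.2.2]

/-- The factorizations `n_j = h_j r_j`, `j = 1, …, 4`. -/
def factorizations (n : ℕ × ℕ × ℕ × ℕ) : Finset ((ℕ × ℕ) × (ℕ × ℕ) × (ℕ × ℕ) × (ℕ × ℕ)) :=
  n.1.divisorsAntidiagonal ×ˢ n.2.1.divisorsAntidiagonal ×ˢ n.2.2.1.divisorsAntidiagonal ×ˢ
    n.2.2.2.divisorsAntidiagonal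

/-- The summation range `n₁, …, n₄ ≤ y`, `α(n, i) ≠ 0` of `S2`. -/
def nonzeroQuads (y : ℝ) (i : Fin 2 × Fin 2 × Fin 2) : Finset (ℕ × ℕ × ℕ × ℕ) :=
  {n ∈ Icc 1 ⌊y⌋₊ ×ˢ Icc 1 ⌊y⌋₊ ×ˢ Icc 1 ⌊y⌋₊ ×ˢ Icc 1 ⌊y⌋₊ | alphaNI n i ≠ 0}

variable {i : Fin 2 × Fin 2 × Fin 2} {n : ℕ × ℕ × ℕ × ℕ} {T y : ℝ}

lemma abs_signVec (i : Fin 2 × Fin 2 × Fin 2) (j : Fin 4) : |signVec i j| = 1 := by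
  fin_cases j <;> simp [signVec]

lemma quadVec_injective : Function.Injective quadVec := fun m n h => by
  simpa [quadVec, Prod.ext_iff] using h

lemma alphaNI_eq_sqrtForm (n : ℕ × ℕ × ℕ × ℕ) (i : Fin 2 × Fin 2 × Fin 2) :
    alphaNI n i = sqrtForm (signVec i) (quadVec n) := by
  simp [alphaNI, sqrtForm, Fin.sum_univ_four, signVec, quadVec]

lemma quadVec_of_mem_nonzeroQuads (hy : 0 ≤ y) (hn : n ∈ nonzeroQuads y i) :
    (∀ j, 0 < quadVec n j ∧ (quadVec n j : ℝ) ≤ y) ∧ sqrtForm (signVec i) (quadVec n) ≠ 0 := by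
  simp only [nonzeroQuads, mem_filter, mem_product, mem_Icc, Nat.le_floor_iff hy] at hn
  obtain ⟨⟨h₁, h₂, h₃, h₄⟩, hα⟩ := hn
  refine ⟨fun j => ?_, alphaNI_eq_sqrtForm n i ▸ hα⟩
  fin_cases j
  exacts [h₁, h₂, h₃, h₄]

lemma card_factorizations (n : ℕ × ℕ × ℕ × ℕ) :
    #(factorizations n) = ∏ j, #(quadVec n j).divisors := by
  have hcard (m : ℕ) : #m.divisorsAntidiagonal = #m.divisors := by
    rw [← Nat.map_div_right_divisors, card_map]
  simp only [factorizations, card_product, hcard, Fin.prod_univ_four, quadVec]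
  simp [mul_assoc]

lemma S2_eq_sum (M₁ M₂ ℓ₁ ℓ₂ : ℕ) (y x : ℝ) :
    S2 M₁ M₂ ℓ₁ ℓ₂ y x = ∑ i, ∑ n ∈ nonzeroQuads y i, ∑ p ∈ factorizations n,
      (∏ j, (quadVec n j : ℝ)) ^ (-(3 : ℝ) / 4) / (32 * π ^ 4) *
        (x * cos (4 * π * alphaNI n i * √x -
          2 * π * betaSum M₁ M₂ ℓ₁ ℓ₂ i p.1 p.2.1 p.2.2.1 p.2.2.2)) := by
  rw [S2, mul_sum]
  refine sum_congr rfl fun i _ => ?_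
  rw [nonzeroQuads, sum_filter]
  simp only [sum_product, mul_sum, factorizations, Fin.prod_univ_four]
  refine sum_congr rfl fun n₁ _ => sum_congr rfl fun n₂ _ => sum_congr rfl fun n₃ _ =>
    sum_congr rfl fun n₄ _ => ?_
  split_ifs
  swap
  · rw [mul_zero]
  simp only [mul_sum]
  refine sum_congr rfl fun p₁ _ => sum_congr rfl fun p₂ _ => sum_congr rfl fun p₃ _ =>
    sum_congr rfl fun p₄ _ => ?_
  simp [quadVec]
  ring

lemma abs_integral_S2_le (M₁ M₂ ℓ₁ ℓ₂ : ℕ) (hT : 0 < T) :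
    |∫ x in (T / 2)..T, S2 M₁ M₂ ℓ₁ ℓ₂ y x| ≤
      ∑ i, ∑ n ∈ nonzeroQuads y i,
        #(factorizations n) * (T * oscWeight T (signVec i) (quadVec n)) := by
  simp only [S2_eq_sum]
  refine (abs_integral_sum_le fun i _ => by fun_prop).trans (sum_le_sum fun i _ => ?_)
  refine (abs_integral_sum_le fun n _ => by fun_prop).trans (sum_le_sum fun n hn => ?_)
  refine (abs_integral_sum_le fun p _ => by fun_prop).trans ?_
  rw [← nsmul_eq_mul]
  refine sum_le_card_nsmul _ _ _ fun p _ => ?_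
  rw [intervalIntegral.integral_const_mul, abs_mul, abs_of_nonneg (by positivity)]
  refine (mul_le_mul_of_nonneg_left
    (abs_integral_mul_cos_four_pi_le hT (mem_filter.mp hn).2 _) (by positivity)).trans_eq ?_
  rw [oscWeight, alphaNI_eq_sqrtForm]
  field_simp

theorem exists_sum_card_factorizations_mul_oscWeight_le {ε : ℝ} (hε : 0 < ε) :
    ∃ C : ℝ, 0 < C ∧ ∀ (i : Fin 2 × Fin 2 × Fin 2) {T : ℝ}, 1 ≤ T →
      ∑ n ∈ nonzeroQuads (T ^ ((3 : ℝ) / 4)) i,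
        #(factorizations n) * (T * oscWeight T (signVec i) (quadVec n)) ≤
          C * T ^ (2 - 1 / 8 + ε) := by
  obtain ⟨C, hC, hsum⟩ := exists_sum_oscWeight_le (half_pos hε)
  obtain ⟨D, hD, hdiv⟩ := exists_card_divisors_le_rpow (ε := ε / 8) (by positivity)
  refine ⟨D ^ 4 * C, by positivity, fun i {T} hT => ?_⟩
  have hT0 : 0 < T := zero_lt_one.trans_le hT
  set S := nonzeroQuads (T ^ ((3 : ℝ) / 4)) i
  have hS : ∀ n ∈ S, (∀ j, 0 < quadVec n j ∧ (quadVec n j : ℝ) ≤ T ^ ((3 : ℝ) / 4)) ∧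
      sqrtForm (signVec i) (quadVec n) ≠ 0 := fun n hn =>
    quadVec_of_mem_nonzeroQuads (by positivity) hn
  have hfact : ∀ n ∈ S, (#(factorizations n) : ℝ) ≤ D ^ 4 * T ^ (ε / 2) := fun n hn => by
    have hle (j : Fin 4) : (#(quadVec n j).divisors : ℝ) ≤ D * T ^ (ε / 8) := by
      refine (hdiv _).trans ?_
      gcongr
      exact ((hS n hn).1 j).2.trans (Real.rpow_le_self_of_one_le hT (by norm_num))
    rw [card_factorizations, Nat.cast_prod]
    refine (prod_le_prod (fun j _ => Nat.cast_nonneg _) fun j _ => hle j).trans_eq ?_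
    rw [prod_const, card_univ, Fintype.card_fin, mul_pow, ← Real.rpow_natCast (T ^ _),
      ← Real.rpow_mul hT0.le]
    ring_nf
  have hweight : ∑ n ∈ S, oscWeight T (signVec i) (quadVec n) ≤ C * T ^ ((7 : ℝ) / 8 + ε / 2) := by
    rw [← sum_image (f := oscWeight T (signVec i)) quadVec_injective.injOn]
    exact hsum hT (abs_signVec i) (forall_mem_image.mpr hS)
  calc _ ≤ ∑ n ∈ S, D ^ 4 * T ^ (ε / 2) * (T * oscWeight T (signVec i) (quadVec n)) :=
        sum_le_sum fun n hn => mul_le_mul_of_nonneg_right (hfact n hn)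
          (mul_nonneg hT0.le (oscWeight_nonneg hT0.le))
    _ = D ^ 4 * T ^ (ε / 2) * (T * ∑ n ∈ S, oscWeight T (signVec i) (quadVec n)) := by
        rw [← mul_sum, ← mul_sum]
    _ ≤ D ^ 4 * T ^ (ε / 2) * (T ^ (1 : ℝ) * (C * T ^ ((7 : ℝ) / 8 + ε / 2))) := by
        rw [Real.rpow_one]
        gcongr
    _ = D ^ 4 * C * (T ^ (ε / 2) * (T ^ (1 : ℝ) * T ^ ((7 : ℝ) / 8 + ε / 2))) := by ring
    _ = D ^ 4 * C * T ^ (2 - 1 / 8 + ε) := by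
        rw [← Real.rpow_add hT0, ← Real.rpow_add hT0]
        ring_nf

end OffDiagonalSum

theorem S2_integral_bound_general (ε : ℝ) (hε : 0 < ε) :
    ∃ C > 0, ∀ M₁ M₂ ℓ₁ ℓ₂ : ℕ, 0 < M₁ → 0 < M₂ → ∀ T : ℝ, 1 ≤ T →
      |∫ x in (T / 2)..T, S2 M₁ M₂ ℓ₁ ℓ₂ (T ^ ((3 : ℝ) / 4)) x| ≤ C * T ^ (2 - 1 / 8 + ε) := by
  obtain ⟨C, hC, hsum⟩ := exists_sum_card_factorizations_mul_oscWeight_le hε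
  refine ⟨8 * C, by positivity, fun M₁ M₂ ℓ₁ ℓ₂ _ _ T hT => ?_⟩
  calc _ ≤ _ := abs_integral_S2_le M₁ M₂ ℓ₁ ℓ₂ (zero_lt_one.trans_le hT)
    _ ≤ ∑ _i : Fin 2 × Fin 2 × Fin 2, C * T ^ (2 - 1 / 8 + ε) := sum_le_sum fun i _ => hsum i hT
    _ = 8 * C * T ^ (2 - 1 / 8 + ε) := by
        rw [sum_const, card_univ, Fintype.card_prod, Fintype.card_prod, Fintype.card_fin,
          nsmul_eq_mul, mul_assoc]
        norm_num

theorem S2_integral_bound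
    (M₁ M₂ ℓ₁ ℓ₂ : ℕ) (hM₁ : 0 < M₁) (hM₂ : 0 < M₂)
    (hℓ₁ : 1 ≤ ℓ₁) (hℓ₁' : ℓ₁ ≤ M₁) (hℓ₂ : 1 ≤ ℓ₂) (hℓ₂' : ℓ₂ ≤ M₂)
    (ε : ℝ) (hε : 0 < ε) :
    ∃ C > 0, ∀ T : ℝ, 10 ≤ T →
      |∫ x in (T/2)..T, S2 M₁ M₂ ℓ₁ ℓ₂ (T ^ ((3:ℝ)/4)) x|
        ≤ C * T ^ (2 - 1/8 + ε) := by
  obtain ⟨C, hC, hbound⟩ := S2_integral_bound_general ε hε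
  exact ⟨C, hC, fun T hT => hbound M₁ M₂ ℓ₁ ℓ₂ hM₁ hM₂ T (le_trans (by norm_num) hT)⟩
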